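/- arXiv:1511.00165 — 5 statements merged into one kernel-verified Lean document; each statement's English description precedes it below -/
import Mathlib

section
/- Let $V_1,\ldots,V_r$ be subspaces of a finite-dimensional vector space $V$ over a field $F$. Then the maximum number $g$ such that one can choose vectors $v_{i_1}\in V_{i_1},\ldots,v_{i_g}\in V_{i_g}$ from $g$ distinct subspaces (indices $i_1 < \cdots < i_g$) which are linearly independent in $V$ equals $\min_{I \subseteq \{1,\ldots,r\}} \left[\dim\left(\sum_{i\in I} V_i\right) + r - |I|\right]$. -/
theorem konig_split {F V : Type*} [Field F] [AddCommGroup V] [Module F V]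
    (W : Submodule F V) : (∃ v, W = Submodule.span F {v}) ∨
      ∃ A B : Submodule F V, A < W ∧ B < W ∧ A ⊔ B = W := by
  by_cases h0 : W = ⊥
  · left; exact ⟨0, by simp [h0]⟩
  obtain ⟨v, hv, hv0⟩ := Submodule.exists_mem_ne_zero_of_ne_bot h0
  by_cases h1 : W = Submodule.span F {v}
  · left; exact ⟨v, h1⟩
  right
  have hle : Submodule.span F {v} ≤ W := by simpa using hv
  obtain ⟨C, hC⟩ := Submodule.exists_isCompl (Submodule.span F {v})
  refine ⟨Submodule.span F {v}, C ⊓ W, lt_of_le_of_ne hle (Ne.symm h1), ?_, ?_⟩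
  · refine lt_of_le_of_ne inf_le_right ?_
    intro h
    have hvC : v ∈ C := by
      have : v ∈ C ⊓ W := by rw [h]; exact hv
      exact this.1
    have : v ∈ Submodule.span F {v} ⊓ C := ⟨Submodule.mem_span_singleton_self v, hvC⟩
    rw [hC.inf_eq_bot] at this
    exact hv0 (by simpa using this)
  · rw [← sup_inf_assoc_of_le C hle, hC.sup_eq_top, top_inf_eq]

theorem konig_exists {F V : Type*} [Field F] [AddCommGroup V] [Module F V]
    [FiniteDimensional F V] (r g : ℕ) (Vs : Fin r → Submodule F V)
    (h : ∀ I : Finset (Fin r), g + I.card ≤ Module.finrank F ↥(⨆ i ∈ I, Vs i) + r) :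
    ∃ (s : Finset (Fin r)) (v : Fin r → V), s.card = g ∧
        (∀ i ∈ s, v i ∈ Vs i) ∧ LinearIndependent F (fun i : s => v i) := by
  classical
  induction Vs using WellFoundedLT.induction with
  | ind Vs ih =>
  by_cases hs : ∀ i, ∃ v, Vs i = Submodule.span F {v}
  · choose v hv using hs
    obtain ⟨κ, a, ha, hsp, hli⟩ := exists_linearIndependent' F v
    have : Fintype κ := Fintype.ofInjective a ha
    have hu := h Finset.univ
    have e : (⨆ i ∈ (Finset.univ : Finset (Fin r)), Vs i) = Submodule.span F (Set.range (v ∘ a)) := by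
      rw [hsp, Submodule.span_range_eq_iSup]
      simp [hv]
    rw [e, finrank_span_eq_card hli, Finset.card_univ, Fintype.card_fin] at hu
    obtain ⟨t, ht⟩ := Finset.exists_subset_card_eq (s := (Finset.univ : Finset κ)) (n := g)
      (by rw [Finset.card_univ]; omega)
    refine ⟨t.image a, v, ?_, ?_, ?_⟩
    · rw [Finset.card_image_of_injective _ ha, ht.2]
    · intro i _
      rw [hv]; exact Submodule.mem_span_singleton_self _
    · have h2 : LinearIndepOn F v (Set.range a) :=
        (linearIndepOn_range_iff ha v).2 hli
      have h3 : LinearIndepOn F v (↑(t.image a) : Set (Fin r)) := h2.mono (by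
        intro x hx
        simp at hx
        obtain ⟨y, _, rfl⟩ := hx
        exact ⟨y, rfl⟩)
      exact h3
  · push Not at hs
    obtain ⟨i, hi⟩ := hs
    obtain ⟨A, B, hA, hB, hAB⟩ := (konig_split (Vs i)).resolve_left (by
      rintro ⟨v, hv⟩; exact hi v hv)
    have key : ∀ A : Submodule F V, A < Vs i → 
      (∃ (s : Finset (Fin r)) (v : Fin r → V), s.card = g ∧
        (∀ i ∈ s, v i ∈ Vs i) ∧ LinearIndependent F (fun i : s => v i)) ∨
      ∃ I : Finset (Fin r), i ∉ I ∧
        Module.finrank F ↥(A ⊔ ⨆ j ∈ I, Vs j) + r < g + (I.card + 1) := by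
      intro A hA
      by_cases hc : ∀ I : Finset (Fin r), g + I.card ≤
        Module.finrank F ↥(⨆ j ∈ I, Function.update Vs i A j) + r
      · left
        have hle : Function.update Vs i A ≤ Vs := update_le_self_iff.2 hA.le
        obtain ⟨s, v, h1, h2, h3⟩ := ih _ (update_lt_self_iff.2 hA) hc
        exact ⟨s, v, h1, fun j hj => hle j (h2 j hj), h3⟩
      · right
        push Not at hc
        obtain ⟨I, hI⟩ := hc
        have hcong : ∀ J : Finset (Fin r), i ∉ J →
            (⨆ j ∈ J, Function.update Vs i A j) = ⨆ j ∈ J, Vs j := by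
          intro J hJ
          refine iSup_congr fun j => iSup_congr fun hj => ?_
          rw [Function.update_of_ne]
          rintro rfl; exact hJ hj
        by_cases hiI : i ∈ I
        · refine ⟨I.erase i, Finset.notMem_erase i I, ?_⟩
          rw [Finset.card_erase_add_one hiI]
          rw [← Finset.insert_erase hiI, Finset.iSup_insert, Function.update_self,
            hcong _ (Finset.notMem_erase i I), Finset.insert_erase hiI] at hI
          exact hI
        · rw [hcong I hiI] at hI
          exact absurd hI (not_lt.2 (h I))
    rcases key A hA with hA' | ⟨I, hiI, hI⟩
    · exact hA'
    rcases key B hB with hB' | ⟨J, hiJ, hJ⟩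
    · exact hB'
    exfalso
    have h1 := h (insert i (I ∪ J))
    have h2 := h (I ∩ J)
    have hd := Submodule.finrank_sup_add_finrank_inf_eq (A ⊔ ⨆ j ∈ I, Vs j) (B ⊔ ⨆ j ∈ J, Vs j)
    have l1 : (⨆ j ∈ insert i (I ∪ J), Vs j) ≤ (A ⊔ ⨆ j ∈ I, Vs j) ⊔ (B ⊔ ⨆ j ∈ J, Vs j) := by
      rw [Finset.iSup_insert, Finset.iSup_union, ← hAB, sup_sup_sup_comm]
    have l2 : (⨆ j ∈ I ∩ J, Vs j) ≤ (A ⊔ ⨆ j ∈ I, Vs j) ⊓ (B ⊔ ⨆ j ∈ J, Vs j) := by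
      refine le_inf (le_sup_of_le_right ?_) (le_sup_of_le_right ?_)
      · exact biSup_mono fun j hj => (Finset.mem_inter.1 hj).1
      · exact biSup_mono fun j hj => (Finset.mem_inter.1 hj).2
    have m1 := Submodule.finrank_mono l1
    have m2 := Submodule.finrank_mono l2
    have c := Finset.card_union_add_card_inter I J
    rw [Finset.card_insert_of_notMem (by simp [hiI, hiJ])] at h1
    omega

/-- Vector-space (linearized) version of König's theorem: the maximum number of
linearly independent vectors choosable from distinct subspaces `V i` equals
`min over I of (dim (∑_{i ∈ I} V i) + r - |I|)`. -/
theorem vectorSpace_konig {F V : Type*} [Field F] [AddCommGroup V] [Module F V]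
    [FiniteDimensional F V] (r : ℕ) (Vs : Fin r → Submodule F V) :
    IsGreatest
      {g : ℕ | ∃ (s : Finset (Fin r)) (v : Fin r → V), s.card = g ∧
        (∀ i ∈ s, v i ∈ Vs i) ∧ LinearIndependent F (fun i : s => v i)}
      (Finset.univ.inf' Finset.univ_nonempty
        (fun I : Finset (Fin r) =>
          Module.finrank F ↥(⨆ i ∈ I, Vs i) + (r - I.card))) := by
  classical
  constructor
  · apply konig_exists
    intro I
    have h1 := Finset.inf'_le (fun I : Finset (Fin r) =>
          Module.finrank F ↥(⨆ i ∈ I, Vs i) + (r - I.card)) (Finset.mem_univ I)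
    have h2 : I.card ≤ r := by simpa using Finset.card_le_univ I
    omega
  · rintro g ⟨s, v, rfl, hv, hli⟩
    apply Finset.le_inf'
    intro I _
    have h3 : LinearIndepOn F v (↑(s ∩ I) : Set (Fin r)) :=
      LinearIndepOn.mono (s := (↑s : Set (Fin r))) hli (by simp)
    have h4 : LinearIndependent F (fun i : ↥(s ∩ I) => v i) := h3
    have h5 := finrank_span_eq_card h4
    have h6 : Submodule.span F (Set.range (fun i : ↥(s ∩ I) => v i)) ≤ ⨆ i ∈ I, Vs i := by
      rw [Submodule.span_le]
      rintro _ ⟨⟨i, hi⟩, rfl⟩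
      rw [Finset.mem_inter] at hi
      exact (le_biSup Vs hi.2) (hv i hi.1)
    have h7 := Submodule.finrank_mono h6
    rw [h5, Fintype.card_coe] at h7
    have h8 := Finset.card_inter_add_card_sdiff s I
    have h9 : (s \ I).card ≤ (Iᶜ).card := Finset.card_le_card (by
      intro x hx; simp at hx ⊢; exact hx.2)
    rw [Finset.card_compl, Fintype.card_fin] at h9
    omega
end

section
/- Let $E = \mathcal{O}^n \subseteq \mathcal{K}^n$ be the standard lattice, where $\mathcal{O} = F[[t]]$, and let $L, M, N$ be lattices with $E \subseteq L, M, N \subseteq t^{-1}E$. Let $U_1, U_2, U_3 \subseteq V := t^{-1}E/E \cong F^n$ be the images of $L, M, N$. Then for $i+j+k = n$, $f^t_{ijk}(L,M,N)$ equals the maximum number of linearly independent vectors in $V$ that can be chosen using at most $i$ vectors from $U_1$, at most $j$ from $U_2$, and at most $k$ from $U_3$. -/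
noncomputable section

/-- A lattice in `K^n`, `K = F((t))`: a finitely generated `F[[t]]`-submodule
of full rank (it spans `K^n` over `K`). -/
def IsLattice {F : Type*} [Field F] {n : ℕ}
    (L : Submodule (PowerSeries F) (Fin n → LaurentSeries F)) : Prop :=
  L.FG ∧ Submodule.span (LaurentSeries F) (L : Set (Fin n → LaurentSeries F)) = ⊤

/-- The set of values `-val (det (v 0, …, v (n-1)))` over nonzero determinants of
vectors `v m` chosen from the lattices `X m` (column `m` from lattice `X m`). -/
def detValSet {F : Type*} [Field F] {n : ℕ}
    (X : Fin n → Submodule (PowerSeries F) (Fin n → LaurentSeries F)) : Set ℤ :=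
  {z | ∃ v : Fin n → Fin n → LaurentSeries F, (∀ m, v m ∈ X m) ∧
    (Matrix.of fun p m => v m p).det ≠ 0 ∧
    z = -((Matrix.of fun p m => v m p).det).order}

/-- Column pattern for two lattices: the first `i` columns from `X`, the rest
from `Y`; `detValSet (cols2 X Y i)` computes `fᵗ_{i,n-i}(X,Y)`. -/
def cols2 {F : Type*} [Field F] {n : ℕ}
    (X Y : Submodule (PowerSeries F) (Fin n → LaurentSeries F)) (i : ℕ) :
    Fin n → Submodule (PowerSeries F) (Fin n → LaurentSeries F) :=
  fun m => if (m : ℕ) < i then X else Y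

/-- Column pattern for three lattices: first `i` columns from `X`, next `j`
from `Y`, remaining from `Z`; `detValSet (cols3 X Y Z i j)` computes
`fᵗ_{i,j,k}(X,Y,Z)` for `k = n - i - j`. -/
def cols3 {F : Type*} [Field F] {n : ℕ}
    (X Y Z : Submodule (PowerSeries F) (Fin n → LaurentSeries F)) (i j : ℕ) :
    Fin n → Submodule (PowerSeries F) (Fin n → LaurentSeries F) :=
  fun m => if (m : ℕ) < i then X else if (m : ℕ) < i + j then Y else Z

/-- The standard lattice `O^n = ⟨e 0, …, e (n-1)⟩`. -/
def stdLattice (F : Type*) [Field F] (n : ℕ) :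
    Submodule (PowerSeries F) (Fin n → LaurentSeries F) :=
  Submodule.span (PowerSeries F)
    (Set.range fun i => Pi.single i (1 : LaurentSeries F))

/-- The lattice `t⁻¹E = ⟨t⁻¹ e 0, …, t⁻¹ e (n-1)⟩`. -/
def tInvStdLattice (F : Type*) [Field F] (n : ℕ) :
    Submodule (PowerSeries F) (Fin n → LaurentSeries F) :=
  Submodule.span (PowerSeries F)
    (Set.range fun i => Pi.single i (HahnSeries.single (-1) (1 : F)))

/-- The set of numbers `g` such that one can choose `g` linearly independent
vectors with at most `i` from `U₁`, `j` from `U₂`, `k` from `U₃`. -/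
def indepChoiceSet {F V : Type*} [Field F] [AddCommGroup V] [Module F V]
    (U₁ U₂ U₃ : Submodule F V) (i j k : ℕ) : Set ℕ :=
  {g | ∃ (v : Fin g → V) (c : Fin g → Fin 3),
    (∀ a, c a = 0 → v a ∈ U₁) ∧ (∀ a, c a = 1 → v a ∈ U₂) ∧
    (∀ a, c a = 2 → v a ∈ U₃) ∧
    (Finset.univ.filter fun a => c a = 0).card ≤ i ∧
    (Finset.univ.filter fun a => c a = 1).card ≤ j ∧
    (Finset.univ.filter fun a => c a = 2).card ≤ k ∧
    LinearIndependent F v}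

open scoped Classical in
theorem aux_dvd {F : Type*} [Field F] {n g : ℕ} (A : Fin n → Fin n → PowerSeries F)
    (h : ∀ S : Finset (Fin n),
      LinearIndependent F (fun m : S => fun p => PowerSeries.constantCoeff (A m p)) →
        S.card ≤ g) :
    (PowerSeries.X : PowerSeries F) ^ (n - g) ∣ (Matrix.of A).det := by
  set A0 : Fin n → Fin n → PowerSeries F :=
    fun m p => PowerSeries.C (PowerSeries.constantCoeff (A m p)) with hA0
  set B : Fin n → Fin n → PowerSeries F :=
    fun m p => PowerSeries.mk fun q => PowerSeries.coeff (q + 1) (A m p) with hB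
  have hA : A = A0 + fun m => (PowerSeries.X : PowerSeries F) • B m := by
    funext m p
    simp only [Pi.add_apply, Pi.smul_apply, smul_eq_mul, hA0, hB]
    rw [add_comm]
    exact PowerSeries.eq_X_mul_shift_add_const _
  have h1 : (Matrix.of A).det = Matrix.detRowAlternating A := rfl
  rw [h1, hA, AlternatingMap.map_add_univ]
  refine Finset.dvd_sum fun S _ => ?_
  by_cases hS : S.card ≤ g
  · have h2 : S.piecewise A0 (fun m => (PowerSeries.X : PowerSeries F) • B m) =
        fun m => (if m ∈ S then (1 : PowerSeries F) else PowerSeries.X) • S.piecewise A0 B m := by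
      funext m
      by_cases hm : m ∈ S <;> simp [hm]
    rw [h2, AlternatingMap.map_smul_univ]
    rw [smul_eq_mul]
    apply Dvd.dvd.mul_right
    rw [Finset.prod_ite]
    simp only [Finset.prod_const, one_pow, one_mul]
    apply pow_dvd_pow
    have : (Finset.univ.filter fun m => m ∉ S) = Sᶜ := by ext; simp
    rw [this, Finset.card_compl, Fintype.card_fin]
    omega
  · have hd : ¬ LinearIndependent F
        (fun m : S => fun p => PowerSeries.constantCoeff (A m p)) := fun hl => hS (h S hl)
    rw [AlternatingMap.map_linearDependent]
    · exact dvd_zero _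
    · intro hl
      apply hd
      have hl' := hl.comp (fun m : S => (m : Fin n)) Subtype.val_injective
      rw [Fintype.linearIndependent_iff] at hl' ⊢
      intro c hc m
      have := hl' (fun m => PowerSeries.C (c m)) ?_ m
      · simpa using this
      · funext p
        have := congrArg (PowerSeries.C (R := F)) (congrFun hc p)
        simpa [Finset.sum_apply, hA0] using this

theorem aux_extend {F : Type*} [Field F] {n g : ℕ} (v : Fin g → Fin n → F)
    (hv : LinearIndependent F v) (σ : Fin g → Fin n) (hσ : Function.Injective σ) :
    ∃ B : Fin n → Fin n → F, LinearIndependent F B ∧ ∀ a, B (σ a) = v a := by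
  classical
  let b := Module.Basis.sumExtend hv
  have : Finite (Fin g ⊕ Module.Basis.sumExtendIndex hv) := Module.Finite.finite_basis b
  let _ : Fintype (Fin g ⊕ Module.Basis.sumExtendIndex hv) := Fintype.ofFinite _
  have hc : Fintype.card (Fin g ⊕ Module.Basis.sumExtendIndex hv) = n := by
    rw [← Module.finrank_eq_card_basis b]; simp
  let e0 := Fintype.equivFinOfCardEq hc
  obtain ⟨e, he⟩ := Finset.exists_equiv_extend_of_card_eq (t := (Finset.univ : Finset (Fin n)))
    (by simpa using hc) (s := Finset.univ.image Sum.inl)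
    (f := Sum.elim σ (fun x => e0 (Sum.inr x))) (by simp) (by
      rintro x hx y hy hxy
      simp only [Finset.coe_image, Finset.coe_univ, Set.image_univ, Set.mem_range] at hx hy
      obtain ⟨x, rfl⟩ := hx
      obtain ⟨y, rfl⟩ := hy
      simp only [Sum.elim_inl] at hxy
      rw [hσ hxy])
  let e' := e.trans (Equiv.subtypeUnivEquiv (fun x => Finset.mem_univ x))
  refine ⟨b ∘ e'.symm, b.linearIndependent.comp _ e'.symm.injective, fun a => ?_⟩
  have h1 : e' (Sum.inl a) = σ a := by
    have := he (Sum.inl a) (by simp)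
    simpa [e'] using this
  have : e'.symm (σ a) = Sum.inl a := by rw [← h1]; simp
  simp only [Function.comp, this]
  simp only [b, Module.Basis.sumExtend, Module.Basis.reindex_apply, Module.Basis.extend_apply_self]
  exact congrArg Subtype.val (Equiv.Set.sumDiffSubset_apply_inl
    (hv.linearIndepOn_id.subset_extend (Set.subset_univ (Set.range v)))
    (Equiv.ofInjective v hv.injective a))

theorem aux_inj {α β : Type*} [Fintype α] [Fintype β] (c : α → Fin 3) (d : β → Fin 3)
    (h : ∀ x, (Finset.univ.filter fun a => c a = x).card ≤
      (Finset.univ.filter fun b => d b = x).card) :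
    ∃ σ : α → β, Function.Injective σ ∧ ∀ a, d (σ a) = c a := by
  have h' : ∀ x, Nonempty ({a // c a = x} ↪ {b // d b = x}) := fun x =>
    Function.Embedding.nonempty_of_card_le (by
      rw [Fintype.card_subtype, Fintype.card_subtype]; exact h x)
  let ψ := fun x => (h' x).some
  refine ⟨fun a => (ψ (c a) ⟨a, rfl⟩).1, ?_, fun a => (ψ (c a) ⟨a, rfl⟩).2⟩
  have key : ∀ x (a b : α) (ha : c a = x) (hb : c b = x),
      (ψ x ⟨a, ha⟩).1 = (ψ x ⟨b, hb⟩).1 → a = b := by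
    intro x a b ha hb hab
    have := (ψ x).injective (Subtype.ext hab)
    simpa using this
  intro a b hab
  have h1 : c a = c b := by
    rw [← (ψ (c a) ⟨a, rfl⟩).2, ← (ψ (c b) ⟨b, rfl⟩).2]
    exact congrArg d hab
  have h2 : ∀ x (hx : c b = x), (ψ x ⟨b, hx⟩).1 = (ψ (c b) ⟨b, rfl⟩).1 := by
    rintro x rfl; rfl
  apply key (c a) a b rfl h1.symm
  rw [h2]
  exact hab

def aux_col {n : ℕ} (i j : ℕ) (m : Fin n) : Fin 3 :=
  if (m : ℕ) < i then 0 else if (m : ℕ) < i + j then 1 else 2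

theorem aux_card {n : ℕ} (i j k : ℕ) (h : i + j + k = n) :
    (Finset.univ.filter fun m : Fin n => aux_col i j m = 0).card = i ∧
    (Finset.univ.filter fun m : Fin n => aux_col i j m = 1).card = j ∧
    (Finset.univ.filter fun m : Fin n => aux_col i j m = 2).card = k := by
  have key : ∀ (x : Fin 3) (a b : ℕ), b ≤ n →
      (∀ m : Fin n, aux_col i j m = x ↔ a ≤ (m : ℕ) ∧ (m : ℕ) < b) →
      (Finset.univ.filter fun m : Fin n => aux_col i j m = x).card = b - a := by
    intro x a b hb hm
    rw [← Nat.card_Ico, ← Finset.card_map Fin.valEmbedding]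
    congr 1
    ext q
    simp only [Finset.mem_map, Finset.mem_filter, Finset.mem_univ, true_and, hm, Finset.mem_Ico,
      Fin.valEmbedding_apply]
    constructor
    · rintro ⟨m, hm, rfl⟩; exact hm
    · intro hq; exact ⟨⟨q, by omega⟩, hq, rfl⟩
  refine ⟨?_, ?_, ?_⟩
  · rw [key 0 0 i (by omega)]; · omega
    intro m; unfold aux_col; split_ifs <;> simp <;> omega
  · rw [key 1 i (i + j) (by omega)]; · omega
    intro m; unfold aux_col; split_ifs <;> simp <;> omega
  · rw [key 2 (i + j) n (by omega)]; · omega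
    intro m; unfold aux_col; split_ifs <;> simp <;> omega

theorem aux_mem_tInv {F : Type*} [Field F] {n : ℕ} {x : Fin n → LaurentSeries F}
    (hx : x ∈ tInvStdLattice F n) : ∃ a : Fin n → PowerSeries F,
      ∀ p, x p = HahnSeries.single (-1) (1 : F) * algebraMap (PowerSeries F) (LaurentSeries F) (a p) := by
  obtain ⟨a, ha⟩ := (Submodule.mem_span_range_iff_exists_fun _).1 hx
  refine ⟨a, fun p => ?_⟩
  rw [← ha]
  simp [Finset.sum_apply, Pi.single_apply, Algebra.smul_def, mul_comm]

theorem aux_mem_std {F : Type*} [Field F] {n : ℕ} (a : Fin n → PowerSeries F) :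
    (fun p => algebraMap (PowerSeries F) (LaurentSeries F) (a p)) ∈ stdLattice F n := by
  refine (Submodule.mem_span_range_iff_exists_fun _).2 ⟨a, ?_⟩
  funext p
  simp [Finset.sum_apply, Pi.single_apply, Algebra.smul_def]

theorem aux_split {F : Type*} [Field F] (a : PowerSeries F) :
    (HahnSeries.single (-1) (PowerSeries.constantCoeff a) : LaurentSeries F) =
      HahnSeries.single (-1) (1 : F) * algebraMap (PowerSeries F) (LaurentSeries F) a -
      algebraMap (PowerSeries F) (LaurentSeries F)
        (PowerSeries.mk fun q => PowerSeries.coeff (q + 1) a) := by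
  conv_rhs => 
    enter [1, 2]
    rw [PowerSeries.eq_X_mul_shift_add_const a]
  rw [map_add, map_mul, mul_add, ← mul_assoc, LaurentSeries.coe_algebraMap]
  rw [HahnSeries.ofPowerSeries_X, HahnSeries.ofPowerSeries_C, HahnSeries.C_apply,
    HahnSeries.single_mul_single, HahnSeries.single_mul_single]
  simp

theorem aux_order {F : Type*} [Field F] (a : PowerSeries F) :
    0 ≤ (algebraMap (PowerSeries F) (LaurentSeries F) a).order := by
  by_cases h : algebraMap (PowerSeries F) (LaurentSeries F) a = 0
  · simp [h]
  rw [HahnSeries.le_order_iff_forall h]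
  intro q hq
  rw [LaurentSeries.coe_algebraMap, PowerSeries.coeff_coe, if_pos hq]

/-- For lattices `E ⊆ L, M, N ⊆ t⁻¹E` with images `U₁, U₂, U₃ ⊆ t⁻¹E/E ≅ F^n`
(a class `u ∈ F^n` lies in the image of `L` iff the vector `(t⁻¹ u_i)_i` lies in
`L`), `fᵗ_{ijk}(L,M,N)` equals the maximal number of linearly independent vectors
choosable with at most `i` from `U₁`, `j` from `U₂`, `k` from `U₃`. -/
theorem triple_val_of_close_lattices {F : Type*} [Field F] {n : ℕ} (i j k : ℕ)
    (hijk : i + j + k = n)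
    (L M N : Submodule (PowerSeries F) (Fin n → LaurentSeries F))
    (hEL : stdLattice F n ≤ L) (hEM : stdLattice F n ≤ M) (hEN : stdLattice F n ≤ N)
    (hLt : L ≤ tInvStdLattice F n) (hMt : M ≤ tInvStdLattice F n)
    (hNt : N ≤ tInvStdLattice F n)
    (U₁ U₂ U₃ : Submodule F (Fin n → F))
    (hU₁ : ∀ u : Fin n → F, u ∈ U₁ ↔
      (fun p => (HahnSeries.single (-1) (u p) : LaurentSeries F)) ∈ L)
    (hU₂ : ∀ u : Fin n → F, u ∈ U₂ ↔
      (fun p => (HahnSeries.single (-1) (u p) : LaurentSeries F)) ∈ M)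
    (hU₃ : ∀ u : Fin n → F, u ∈ U₃ ↔
      (fun p => (HahnSeries.single (-1) (u p) : LaurentSeries F)) ∈ N)
    (g : ℕ) (hg : IsGreatest (indepChoiceSet U₁ U₂ U₃ i j k) g) :
    IsGreatest (detValSet (cols3 L M N i j)) (g : ℤ) := by
  have hcol : ∀ m, aux_col i j m = 0 ∧ cols3 L M N i j m = L ∨
      aux_col i j m = 1 ∧ cols3 L M N i j m = M ∨
      aux_col i j m = 2 ∧ cols3 L M N i j m = N := by
    intro m
    unfold aux_col cols3
    split_ifs <;> simp
  have hE : ∀ m, stdLattice F n ≤ cols3 L M N i j m := by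
    intro m
    rcases hcol m with ⟨_, h⟩ | ⟨_, h⟩ | ⟨_, h⟩ <;> rw [h] <;> assumption
  have hT : ∀ m, cols3 L M N i j m ≤ tInvStdLattice F n := by
    intro m
    rcases hcol m with ⟨_, h⟩ | ⟨_, h⟩ | ⟨_, h⟩ <;> rw [h] <;> assumption
  have hdet : ∀ v : Fin n → Fin n → LaurentSeries F,
      (Matrix.of fun p m => v m p).det = (Matrix.of v).det := by
    intro v
    rw [← Matrix.det_transpose]; rfl
  obtain ⟨hc0, hc1, hc2⟩ := aux_card (n := n) i j k hijk
  constructor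
  · obtain ⟨v, c, h0, h1, h2, k0, k1, k2, hv⟩ := hg.1
    obtain ⟨σ, hσ, hσc⟩ := aux_inj c (aux_col (n := n) i j) (by
      intro x
      fin_cases x
      · exact k0.trans hc0.ge
      · exact k1.trans hc1.ge
      · exact k2.trans hc2.ge)
    obtain ⟨B, hB, hBσ⟩ := aux_extend v hv σ hσ
    classical
    let S : Finset (Fin n) := Finset.univ.image σ
    have hScard : S.card = g := by
      simp [S, Finset.card_image_of_injective _ hσ]
    let s : Fin n → LaurentSeries F := fun m => if m ∈ S then HahnSeries.single (-1) 1 else 1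
    have hdetB : (Matrix.of B).det ≠ 0 := by
      have : IsUnit (Matrix.of B) := Matrix.linearIndependent_rows_iff_isUnit.1 hB
      exact ((Matrix.isUnit_iff_isUnit_det _).1 this).ne_zero
    have hD : (Matrix.of fun m p => s m * HahnSeries.C (B m p)).det =
        HahnSeries.single (-1) (1 : F) ^ g * HahnSeries.C ((Matrix.of B).det) := by
      have e1 := Matrix.det_mul_column s ((HahnSeries.C (Γ := ℤ) (R := F)).mapMatrix (Matrix.of B))
      rw [← RingHom.map_det] at e1
      have e2 : ∏ m, s m = HahnSeries.single (-1) (1 : F) ^ g := by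
        simp only [s]
        rw [Finset.prod_ite]
        simp [hScard]
      rw [e2] at e1
      exact e1
    have hne : (HahnSeries.single (-1) (1 : F) : LaurentSeries F) ^ g ≠ 0 :=
      pow_ne_zero _ (by simp)
    have hne2 : (HahnSeries.C ((Matrix.of B).det) : LaurentSeries F) ≠ 0 := by
      simpa using hdetB
    refine ⟨fun m p => s m * HahnSeries.C (B m p), ?_, ?_, ?_⟩
    · intro m
      by_cases hm : m ∈ S
      · obtain ⟨a, -, rfl⟩ := Finset.mem_image.1 hm
        have hs : (fun p => s (σ a) * HahnSeries.C (B (σ a) p)) =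
            fun p => (HahnSeries.single (-1) (v a p) : LaurentSeries F) := by
          funext p
          simp only [s, if_pos hm, hBσ, HahnSeries.C_apply, HahnSeries.single_mul_single]
          simp
        change (fun p => s (σ a) * HahnSeries.C (B (σ a) p)) ∈ _
        rw [hs]
        have hca := hσc a
        rcases hcol (σ a) with ⟨e, h⟩ | ⟨e, h⟩ | ⟨e, h⟩ <;> rw [h] <;> rw [e] at hca
        · exact (hU₁ _).1 (h0 a hca.symm)
        · exact (hU₂ _).1 (h1 a hca.symm)
        · exact (hU₃ _).1 (h2 a hca.symm)
      · apply hE m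
        convert aux_mem_std (fun p => PowerSeries.C (B m p)) using 2 with p
        simp [s, hm, LaurentSeries.coe_algebraMap]
    · rw [hdet, hD]
      exact mul_ne_zero hne hne2
    · rw [hdet, hD, HahnSeries.order_mul hne hne2, HahnSeries.order_pow, 
        HahnSeries.order_single one_ne_zero, HahnSeries.order_C]
      simp
  · rintro z ⟨v, hv, hne, rfl⟩
    rw [hdet] at hne ⊢
    choose A hA using fun m => aux_mem_tInv (hT m (hv m))
    have hU : ∀ m, (fun p => (HahnSeries.single (-1) (PowerSeries.constantCoeff (A m p)) :
        LaurentSeries F)) ∈ cols3 L M N i j m := by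
      intro m
      have := (cols3 L M N i j m).sub_mem (hv m) (hE m (aux_mem_std
        (fun p => PowerSeries.mk fun q => PowerSeries.coeff (q + 1) (A m p))))
      convert this using 1
      funext p
      rw [aux_split, Pi.sub_apply, hA]
    have hdvd := aux_dvd (g := g) A (by
      intro S hS
      apply hg.2
      let f : Fin S.card → Fin n := fun a => S.orderEmbOfFin rfl a
      have hf : Function.Injective f := (S.orderEmbOfFin rfl).injective
      have hfc : ∀ x, (Finset.univ.filter fun a => aux_col i j (f a) = x).card ≤
          (Finset.univ.filter fun m : Fin n => aux_col i j m = x).card := by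
        intro x
        apply Finset.card_le_card_of_injOn f
        · intro a ha
          simpa using ha
        · exact hf.injOn
      refine ⟨fun a p => PowerSeries.constantCoeff (A (f a) p), fun a => aux_col i j (f a),
        ?_, ?_, ?_, (hfc 0).trans hc0.le, (hfc 1).trans hc1.le, (hfc 2).trans hc2.le, ?_⟩
      · intro a ha
        rw [hU₁]
        have := hU (f a)
        rcases hcol (f a) with ⟨e, h⟩ | ⟨e, h⟩ | ⟨e, h⟩ <;> rw [h] at this <;>
          first | exact this | exact absurd (ha.symm.trans e) (by decide)
      · intro a ha
        rw [hU₂]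
        have := hU (f a)
        rcases hcol (f a) with ⟨e, h⟩ | ⟨e, h⟩ | ⟨e, h⟩ <;> rw [h] at this <;>
          first | exact this | exact absurd (ha.symm.trans e) (by decide)
      · intro a ha
        rw [hU₃]
        have := hU (f a)
        rcases hcol (f a) with ⟨e, h⟩ | ⟨e, h⟩ | ⟨e, h⟩ <;> rw [h] at this <;>
          first | exact this | exact absurd (ha.symm.trans e) (by decide)
      · exact hS.comp (fun a => ⟨f a, S.orderEmbOfFin_mem rfl a⟩) (by
          intro a b hab
          exact hf (congrArg Subtype.val hab)))
    obtain ⟨D, hD⟩ := hdvd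
    have hdv : (Matrix.of v).det = HahnSeries.single (-1) (1 : F) ^ n *
        (HahnSeries.single 1 (1 : F) ^ (n - g) *
          algebraMap (PowerSeries F) (LaurentSeries F) D) := by
      have e0 : Matrix.of v = (HahnSeries.single (-1) (1 : F) : LaurentSeries F) •
          (algebraMap (PowerSeries F) (LaurentSeries F)).mapMatrix (Matrix.of A) := by
        ext1 m p
        exact hA m p
      rw [e0, Matrix.det_smul, ← RingHom.map_det, hD, map_mul, map_pow,
        LaurentSeries.coe_algebraMap, HahnSeries.ofPowerSeries_X, Fintype.card_fin]
    rw [hdv] at hne ⊢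
    have n1 := left_ne_zero_of_mul hne
    have n2 := right_ne_zero_of_mul hne
    have n3 := left_ne_zero_of_mul n2
    have n4 := right_ne_zero_of_mul n2
    rw [HahnSeries.order_mul n1 n2, HahnSeries.order_mul n3 n4, HahnSeries.order_pow,
      HahnSeries.order_pow, HahnSeries.order_single one_ne_zero,
      HahnSeries.order_single one_ne_zero]
    have := aux_order D
    simp only [nsmul_eq_mul]
    omega

end
end

section
/- Let $U_1, U_2, U_3$ be subspaces of an $n$-dimensional vector space $V$ over a field, and let $i,j,k \geq 0$ with $i+j+k=n$. Let $g$ be the maximum number of linearly independent vectors that may be chosen with at most $i$ from $U_1$, $j$ from $U_2$, and $k$ from $U_3$. Then $g = \min\{i+j+k,\; j+k+\dim U_1,\; i+k+\dim U_2,\; i+j+\dim U_3,\; k+\dim(U_1+U_2),\; j+\dim(U_1+U_3),\; i+\dim(U_2+U_3),\; \dim(U_1+U_2+U_3)\}$. -/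
open Module in
theorem rado_split {F V : Type*} [Field F] [AddCommGroup V] [Module F V]
    [FiniteDimensional F V] (A : Submodule F V) (hA : 2 ≤ finrank F A) :
    ∃ B C : Submodule F V, B < A ∧ C < A ∧ B ⊔ C = A := by
  have hne : A ≠ ⊥ := by
    rintro rfl
    simp at hA
  obtain ⟨x, hx, hx0⟩ := Submodule.exists_mem_ne_zero_of_ne_bot hne
  obtain ⟨Q, hQ⟩ := Submodule.exists_isCompl (Submodule.span F {x})
  have hle : Submodule.span F {x} ≤ A := by
    rw [Submodule.span_le]; simpa using hx
  refine ⟨Submodule.span F {x}, Q ⊓ A, lt_of_le_of_ne hle ?_, lt_of_le_of_ne inf_le_right ?_, ?_⟩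
  · intro h
    rw [← h, finrank_span_singleton hx0] at hA
    omega
  · intro h
    have hxQ : x ∈ Q := by
      rw [← h] at hx
      exact hx.1
    have := hQ.disjoint
    rw [Submodule.disjoint_def] at this
    exact hx0 (this x (Submodule.mem_span_singleton_self x) hxQ)
  · rw [← sup_inf_assoc_of_le Q hle, hQ.sup_eq_top, top_inf_eq]

open Module in
theorem rado_fail {F V ι : Type*} [Field F] [AddCommGroup V] [Module F V]
    [DecidableEq ι] (d : ℕ) (A : ι → Submodule F V)
    (h : ∀ J : Finset ι, J.card ≤ finrank F ↥(J.sup A) + d) (t : ι) (B : Submodule F V)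
    (hB : ¬ ∀ J : Finset ι, J.card ≤ finrank F ↥(J.sup (Function.update A t B)) + d) :
    ∃ J : Finset ι, t ∉ J ∧ finrank F ↥(B ⊔ J.sup A) + d ≤ J.card := by
  push Not at hB
  obtain ⟨J, hJ⟩ := hB
  have key : ∀ K : Finset ι, t ∉ K → K.sup (Function.update A t B) = K.sup A := by
    intro K hK
    apply Finset.sup_congr rfl
    intro s hs
    rw [Function.update_of_ne]
    rintro rfl
    exact hK hs
  by_cases ht : t ∈ J
  · refine ⟨J.erase t, Finset.notMem_erase t J, ?_⟩
    rw [← Finset.insert_erase ht, Finset.sup_insert, key _ (Finset.notMem_erase t J),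
      Function.update_self, Finset.card_insert_of_notMem (Finset.notMem_erase t J)] at hJ
    omega
  · rw [key J ht] at hJ
    have := h J
    omega

open Module in
theorem rado_defect {F V ι : Type*} [Field F] [AddCommGroup V] [Module F V]
    [FiniteDimensional F V] [Fintype ι] [DecidableEq ι] (d N : ℕ) :
    ∀ (A : ι → Submodule F V), ∑ t, finrank F (A t) ≤ N →
    (∀ J : Finset ι, J.card ≤ finrank F ↥(J.sup A) + d) →
    ∃ (g : ℕ) (a : Fin g → ι) (v : Fin g → V), Fintype.card ι ≤ g + d ∧
      Function.Injective a ∧ (∀ x, v x ∈ A (a x)) ∧ LinearIndependent F v := by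
  induction N using Nat.strong_induction_on with
  | _ N ih =>
  intro A hN h
  by_cases hbig : ∃ t, 2 ≤ finrank F (A t)
  · obtain ⟨t, ht⟩ := hbig
    obtain ⟨B, C, hBA, hCA, hBC⟩ := rado_split (A t) ht
    have step : ∀ B : Submodule F V, B < A t →
        (∀ J : Finset ι, J.card ≤ finrank F ↥(J.sup (Function.update A t B)) + d) →
        ∃ (g : ℕ) (a : Fin g → ι) (v : Fin g → V), Fintype.card ι ≤ g + d ∧
      Function.Injective a ∧ (∀ x, v x ∈ A (a x)) ∧ LinearIndependent F v := by
      intro B hB hJ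
      have hle : ∀ s, Function.update A t B s ≤ A s := by
        intro s
        by_cases hs : s = t
        · subst hs; simpa using hB.le
        · rw [Function.update_of_ne hs]
      have hlt : ∑ s, finrank F (Function.update A t B s) < ∑ s, finrank F (A s) := by
        apply Finset.sum_lt_sum
        · intro s _
          exact Submodule.finrank_mono (hle s)
        · refine ⟨t, Finset.mem_univ t, ?_⟩
          rw [Function.update_self]
          exact Submodule.finrank_lt_finrank_of_lt hB
      obtain ⟨g, a, v, h1, h2, h3, h4⟩ := ih _ (lt_of_lt_of_le hlt hN) _ le_rfl hJ
      exact ⟨g, a, v, h1, h2, fun x => hle _ (h3 x), h4⟩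
    by_cases h1 : ∀ J : Finset ι, J.card ≤ finrank F ↥(J.sup (Function.update A t B)) + d
    · exact step B hBA h1
    by_cases h2 : ∀ J : Finset ι, J.card ≤ finrank F ↥(J.sup (Function.update A t C)) + d
    · exact step C hCA h2
    exfalso
    obtain ⟨J, htJ, hJ⟩ := rado_fail d A h t B h1
    obtain ⟨K, htK, hK⟩ := rado_fail d A h t C h2
    have e1 := Submodule.finrank_sup_add_finrank_inf_eq (B ⊔ J.sup A) (C ⊔ K.sup A)
    have e2 : (B ⊔ J.sup A) ⊔ (C ⊔ K.sup A) = (insert t (J ∪ K)).sup A := by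
      rw [Finset.sup_insert, Finset.sup_union, ← hBC, sup_sup_sup_comm]
    have e3 : finrank F ↥((J ∩ K).sup A) ≤
        finrank F ↥((B ⊔ J.sup A) ⊓ (C ⊔ K.sup A)) := by
      apply Submodule.finrank_mono
      exact le_inf (le_sup_of_le_right (Finset.sup_mono Finset.inter_subset_left))
        (le_sup_of_le_right (Finset.sup_mono Finset.inter_subset_right))
    have e4 := h (insert t (J ∪ K))
    rw [Finset.card_insert_of_notMem (by simp [htJ, htK])] at e4
    have e5 := h (J ∩ K)
    have e6 := Finset.card_union_add_card_inter J K
    rw [e2] at e1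
    omega
  · push Not at hbig
    have hv : ∀ t, ∃ v : V, A t = Submodule.span F {v} := by
      intro t
      have h1 : finrank F (A t) ≤ 1 := by have := hbig t; omega
      obtain ⟨v, hv⟩ := finrank_le_one_iff.1 h1
      refine ⟨v, le_antisymm ?_ ?_⟩
      · intro w hw
        obtain ⟨c, hc⟩ := hv ⟨w, hw⟩
        rw [Submodule.mem_span_singleton]
        exact ⟨c, by simpa using congrArg Subtype.val hc⟩
      · rw [Submodule.span_le]; simp
    choose v hv using hv
    obtain ⟨κ, a, ha, hs, hli⟩ := exists_linearIndependent' F v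
    have : Finite κ := Finite.of_injective a ha
    have := Fintype.ofFinite κ
    have hsup : Finset.univ.sup A ≤ Submodule.span F (Set.range (v ∘ a)) := by
      rw [hs]
      apply Finset.sup_le
      intro t _
      rw [hv t]
      exact Submodule.span_mono (by simp)
    have h1 := h Finset.univ
    have h2 := Submodule.finrank_mono hsup
    rw [finrank_span_eq_card hli] at h2
    rw [Finset.card_univ] at h1
    let e := (Fintype.equivFin κ).symm
    refine ⟨Fintype.card κ, a ∘ e, (v ∘ a) ∘ e, by omega, ha.comp e.injective, ?_,
      hli.comp e e.injective⟩
    intro x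
    simp only [Function.comp]
    rw [hv]
    exact Submodule.mem_span_singleton_self _

open Module in
theorem cut_upper {F V : Type*} [Field F] [AddCommGroup V] [Module F V]
    [FiniteDimensional F V] (U : Fin 3 → Submodule F V) (w : Fin 3 → ℕ) (g : ℕ)
    (v : Fin g → V) (c : Fin g → Fin 3) (hv : ∀ a, v a ∈ U (c a))
    (hw : ∀ x, (Finset.univ.filter fun a => c a = x).card ≤ w x)
    (hli : LinearIndependent F v) (C : Finset (Fin 3)) :
    g ≤ ∑ x ∈ Cᶜ, w x + finrank F ↥(C.sup U) := by
  classical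
  have h1 : Fintype.card {a // c a ∈ C} ≤ finrank F ↥(C.sup U) := by
    have hl := hli.comp (Subtype.val : {a // c a ∈ C} → Fin g) Subtype.val_injective
    rw [← finrank_span_eq_card hl]
    apply Submodule.finrank_mono
    rw [Submodule.span_le]
    rintro _ ⟨a, rfl⟩
    exact Finset.le_sup (f := U) a.2 (hv a)
  have h2 : (Finset.univ.filter fun a => c a ∈ Cᶜ).card ≤ ∑ x ∈ Cᶜ, w x := by
    rw [Finset.card_eq_sum_card_fiberwise (f := c) (t := Cᶜ)]
    · refine Finset.sum_le_sum fun x _ => le_trans (Finset.card_le_card ?_) (hw x)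
      intro a
      simp
    · intro a
      simp
  have h3 := Finset.card_filter_add_card_filter_not (s := (Finset.univ : Finset (Fin g)))
    (fun a => c a ∈ C)
  rw [Fintype.card_subtype] at h1
  simp only [Finset.mem_compl] at h2
  simp only [Finset.card_univ, Fintype.card_fin] at h3
  omega

open Module in
theorem cut_lower {F V : Type*} [Field F] [AddCommGroup V] [Module F V]
    [FiniteDimensional F V] (U : Fin 3 → Submodule F V) (w : Fin 3 → ℕ) (m : ℕ)
    (hm : ∀ C : Finset (Fin 3), m ≤ ∑ x ∈ Cᶜ, w x + finrank F ↥(C.sup U)) :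
    ∃ (v : Fin m → V) (c : Fin m → Fin 3), (∀ a, v a ∈ U (c a)) ∧
    (∀ x, (Finset.univ.filter fun a => c a = x).card ≤ w x) ∧ LinearIndependent F v := by
  classical
  have hcard : Fintype.card (Σ c : Fin 3, Fin (w c)) = ∑ x, w x := by simp
  have hm0 : m ≤ ∑ x, w x := by
    have := hm ∅
    rw [Finset.sup_empty] at this
    simpa using this
  obtain ⟨d, hd⟩ := Nat.exists_eq_add_of_le hm0
  obtain ⟨g, a, v, h1, h2, h3, h4⟩ := rado_defect (F := F) (V := V) d _
    (fun t : (Σ c : Fin 3, Fin (w c)) => U t.1) le_rfl (by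
      intro J
      have e1 : J ⊆ (J.image Sigma.fst).sigma fun _ => Finset.univ := by
        intro t ht
        simp only [Finset.mem_sigma, Finset.mem_univ, and_true]
        exact Finset.mem_image_of_mem _ ht
      have e2 := Finset.card_le_card e1
      simp only [Finset.card_sigma, Finset.card_univ, Fintype.card_fin] at e2
      have e3 := hm (J.image Sigma.fst)
      rw [Finset.sup_image] at e3
      have e4 := Finset.sum_add_sum_compl (J.image Sigma.fst) w
      change m ≤ _ + finrank F ↥(J.sup (fun t => U t.1)) at e3
      omega)
  have hg : m ≤ g := by omega
  refine ⟨v ∘ Fin.castLE hg, fun x => (a (Fin.castLE hg x)).1, fun x => h3 _, ?_,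
    h4.comp _ (Fin.castLE_injective hg)⟩
  intro x
  have : (Finset.univ.filter fun y : Fin m => (a (Fin.castLE hg y)).1 = x).card ≤
      (({x} : Finset (Fin 3)).sigma fun c => (Finset.univ : Finset (Fin (w c)))).card := by
    apply Finset.card_le_card_of_injOn (fun y => a (Fin.castLE hg y))
    · intro y hy
      simpa using hy
    · exact (h2.comp (Fin.castLE_injective hg)).injOn
  simpa [Finset.card_sigma] using this

theorem cut_val {F V : Type*} [Field F] [AddCommGroup V] [Module F V]
    (U : Fin 3 → Submodule F V) (w : Fin 3 → ℕ) (C D : Finset (Fin 3)) (m : ℕ)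
    (W : Submodule F V) (hD : Cᶜ = D) (hm : ∑ x ∈ D, w x = m) (hW : C.sup U = W) :
    ∑ x ∈ Cᶜ, w x + Module.finrank F ↥(C.sup U) = m + Module.finrank F ↥W := by
  rw [hD, hm, hW]

/-- The maximum number of linearly independent vectors choosable with at most
`i` from `U₁`, `j` from `U₂` and `k` from `U₃` (in an `n`-dimensional space with
`i+j+k = n`) is the minimum of the eight cut values. -/
theorem indep_three_subspaces_min_cut {F V : Type*} [Field F] [AddCommGroup V] [Module F V]
    [FiniteDimensional F V] (n i j k : ℕ) (hn : Module.finrank F V = n)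
    (h : i + j + k = n) (U₁ U₂ U₃ : Submodule F V) :
    IsGreatest (indepChoiceSet U₁ U₂ U₃ i j k)
      (min (i + j + k)
        (min (j + k + Module.finrank F ↥U₁)
          (min (i + k + Module.finrank F ↥U₂)
            (min (i + j + Module.finrank F ↥U₃)
              (min (k + Module.finrank F ↥(U₁ ⊔ U₂))
                (min (j + Module.finrank F ↥(U₁ ⊔ U₃))
                  (min (i + Module.finrank F ↥(U₂ ⊔ U₃))
                    (Module.finrank F ↥(U₁ ⊔ U₂ ⊔ U₃))))))))) := by
  have e0 := cut_val ![U₁, U₂, U₃] ![i, j, k] ∅ {0, 1, 2} (i + j + k) (⊥) (by decide)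
    (by simp [add_assoc]) (by simp)
  have e1 := cut_val ![U₁, U₂, U₃] ![i, j, k] {0} {1, 2} (j + k) (U₁) (by decide)
    (by simp) (by simp)
  have e2 := cut_val ![U₁, U₂, U₃] ![i, j, k] {1} {0, 2} (i + k) (U₂) (by decide)
    (by simp) (by simp)
  have e3 := cut_val ![U₁, U₂, U₃] ![i, j, k] {2} {0, 1} (i + j) (U₃) (by decide)
    (by simp) (by simp)
  have e4 := cut_val ![U₁, U₂, U₃] ![i, j, k] {0, 1} {2} (k) (U₁ ⊔ U₂) (by decide)
    (by simp) (by simp)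
  have e5 := cut_val ![U₁, U₂, U₃] ![i, j, k] {0, 2} {1} (j) (U₁ ⊔ U₃) (by decide)
    (by simp) (by simp)
  have e6 := cut_val ![U₁, U₂, U₃] ![i, j, k] {1, 2} {0} (i) (U₂ ⊔ U₃) (by decide)
    (by simp) (by simp)
  have e7 := cut_val ![U₁, U₂, U₃] ![i, j, k] {0, 1, 2} ∅ (0) (U₁ ⊔ U₂ ⊔ U₃) (by decide)
    (by simp) (by simp [sup_assoc])
  rw [finrank_bot] at e0
  constructor
  · generalize hM : (min (i + j + k)
        (min (j + k + Module.finrank F ↥U₁)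
          (min (i + k + Module.finrank F ↥U₂)
            (min (i + j + Module.finrank F ↥U₃)
              (min (k + Module.finrank F ↥(U₁ ⊔ U₂))
                (min (j + Module.finrank F ↥(U₁ ⊔ U₃))
                  (min (i + Module.finrank F ↥(U₂ ⊔ U₃))
                    (Module.finrank F ↥(U₁ ⊔ U₂ ⊔ U₃))))))))) = m
    have hle := le_of_eq hM.symm
    simp only [le_min_iff] at hle
    obtain ⟨m0, m1, m2, m3, m4, m5, m6, m7⟩ := hle
    clear hM
    obtain ⟨v, c, h1, h2, h3⟩ := cut_lower ![U₁, U₂, U₃] ![i, j, k] m (fun C => by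
        have hC : C = ∅ ∨ C = {0} ∨ C = {1} ∨ C = {2} ∨ C = {0, 1} ∨ C = {0, 2} ∨ C = {1, 2} ∨
          C = {0, 1, 2} := by clear * -; revert C; decide
        rcases hC with rfl | rfl | rfl | rfl | rfl | rfl | rfl | rfl
        · rw [e0]; exact m0
        · rw [e1]; exact m1
        · rw [e2]; exact m2
        · rw [e3]; exact m3
        · rw [e4]; exact m4
        · rw [e5]; exact m5
        · rw [e6]; exact m6
        · rw [e7, zero_add]; exact m7)
    exact ⟨v, c, fun a ha => by simpa [ha] using h1 a, fun a ha => by simpa [ha] using h1 a,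
      fun a ha => by simpa [ha] using h1 a, h2 0, h2 1, h2 2, h3⟩
  · rintro g ⟨v, c, h0, h1, h2, w0, w1, w2, hli⟩
    have key := cut_upper ![U₁, U₂, U₃] ![i, j, k] g v c (by
      intro a
      have hc : c a = 0 ∨ c a = 1 ∨ c a = 2 := by generalize c a = x; revert x; decide
      rcases hc with hc | hc | hc
      · simpa [hc] using h0 a hc
      · simpa [hc] using h1 a hc
      · simpa [hc] using h2 a hc) (by
      intro x
      fin_cases x
      · exact w0
      · exact w1
      · exact w2) hli
    have k0 := key ∅
    have k1 := key {0}
    have k2 := key {1}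
    have k3 := key {2}
    have k4 := key {0, 1}
    have k5 := key {0, 2}
    have k6 := key {1, 2}
    have k7 := key {0, 1, 2}
    rw [e0] at k0
    rw [e1] at k1
    rw [e2] at k2
    rw [e3] at k3
    rw [e4] at k4
    rw [e5] at k5
    rw [e6] at k6
    rw [e7] at k7
    simp only [le_min_iff]
    rw [zero_add] at k7
    exact ⟨k0, k1, k2, k3, k4, k5, k6, k7⟩
end

section
/- Let $U_1, U_2, U_3$ be subspaces of a finite-dimensional vector space $V$ and $i, j, k$ nonnegative integers. The quantity $\max$(number of linearly independent vectors choosable with at most $i$ from $U_1$, $j$ from $U_2$, $k$ from $U_3$) equals $\min_{I}\left[\dim\left(\sum_{m \in I} W_m\right) + (i+j+k) - |I|\right]$ where $W_1,\ldots,W_{i+j+k}$ is the multiset consisting of $i$ copies of $U_1$, $j$ copies of $U_2$, and $k$ copies of $U_3$, and $I$ ranges over subsets of indices. Moreover, the minimum is attained at some $I$ that contains all or none of the indices of each repeated block. -/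
open Finset in
theorem rado_defect_s9 {F V : Type*} [Field F] [AddCommGroup V] [Module F V]
    [FiniteDimensional F V] {ι : Type*} [Fintype ι] [DecidableEq ι] (g : ℕ) :
    ∀ (n : ℕ) (W : ι → Submodule F V), ∑ m, Module.finrank F (W m) = n →
    (∀ I : Finset ι, g + I.card ≤ Module.finrank F ↥(⨆ m ∈ I, W m) + Fintype.card ι) →
    ∃ v : ι → V, (∀ m, v m ∈ W m) ∧ g ≤ Module.finrank F (Submodule.span F (Set.range v)) := by
  intro n
  induction n using Nat.strong_induction_on with
  | _ n ih =>
  intro W hn hW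
  by_cases h1 : ∀ m, Module.finrank F (W m) ≤ 1
  · have h2 : ∀ m, ∃ x, W m = Submodule.span F {x} := by
      intro m
      obtain ⟨x, hx⟩ := finrank_le_one_iff.1 (h1 m)
      refine ⟨x, le_antisymm ?_ ?_⟩
      · intro w hw
        obtain ⟨c, hc⟩ := hx ⟨w, hw⟩
        exact Submodule.mem_span_singleton.2 ⟨c, by simpa using congrArg Subtype.val hc⟩
      · rw [Submodule.span_singleton_le_iff_mem]; exact x.2
    choose v hv using h2
    refine ⟨v, fun m => by rw [hv m]; exact Submodule.mem_span_singleton_self _, ?_⟩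
    have := hW univ
    have e : (⨆ m ∈ (univ : Finset ι), W m) = Submodule.span F (Set.range v) := by
      rw [Submodule.span_range_eq_iSup]
      simp [hv]
    rw [e, card_univ] at this
    omega
  push Not at h1
  obtain ⟨m, hm⟩ := h1
  have key : ∀ H : Submodule F V, H < W m →
      (∃ I : Finset ι, m ∉ I ∧
        Module.finrank F ↥(H ⊔ ⨆ a ∈ I, W a) + Fintype.card ι < g + I.card + 1) ∨
      ∃ v : ι → V, (∀ m, v m ∈ W m) ∧
        g ≤ Module.finrank F (Submodule.span F (Set.range v)) := by
    intro H hH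
    by_cases hc : ∀ I : Finset ι, g + I.card ≤
        Module.finrank F ↥(⨆ a ∈ I, Function.update W m H a) + Fintype.card ι
    · right
      have hle : ∀ a, Function.update W m H a ≤ W a := by
        intro a
        by_cases ha : a = m
        · subst ha; simpa using hH.le
        · simp [ha]
      obtain ⟨v, hv, hv'⟩ := ih _ (by
        rw [← hn]
        refine sum_lt_sum (fun a _ => Submodule.finrank_mono (hle a)) ⟨m, mem_univ _, ?_⟩
        rw [Function.update_self]
        exact Submodule.finrank_lt_finrank_of_lt hH) (Function.update W m H) rfl hc
      exact ⟨v, fun a => hle a (hv a), hv'⟩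
    · left
      push Not at hc
      obtain ⟨I, hI⟩ := hc
      have hcong : ∀ J : Finset ι, m ∉ J →
          (⨆ a ∈ J, Function.update W m H a) = ⨆ a ∈ J, W a := by
        intro J hJ
        refine iSup_congr fun a => iSup_congr fun ha => ?_
        rw [Function.update_of_ne]
        rintro rfl
        exact hJ ha
      have hmI : m ∈ I := by
        by_contra h
        rw [hcong I h] at hI
        have := hW I
        omega
      refine ⟨I.erase m, notMem_erase _ _, ?_⟩
      have hce := card_erase_add_one hmI
      have heq : (⨆ a ∈ I, Function.update W m H a) = H ⊔ ⨆ a ∈ I.erase m, W a := by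
        conv_lhs => rw [← insert_erase hmI]
        rw [Finset.iSup_insert, hcong _ (notMem_erase _ _), Function.update_self]
      rw [heq] at hI
      omega
  obtain ⟨x, hx, hx0⟩ : ∃ x ∈ W m, x ≠ 0 := by
    apply Submodule.exists_mem_ne_zero_of_ne_bot
    intro h
    rw [h] at hm
    simp at hm
  obtain ⟨C, hC⟩ := Submodule.exists_isCompl (Submodule.span F {x})
  have hxW : Submodule.span F {x} ≤ W m := by
    rwa [Submodule.span_singleton_le_iff_mem]
  have hlt1 : Submodule.span F {x} < W m := by
    refine lt_of_le_of_ne hxW fun h => ?_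
    rw [← h, finrank_span_singleton hx0] at hm
    omega
  have hlt2 : C ⊓ W m < W m := by
    refine lt_of_le_of_ne inf_le_right fun h => hx0 ?_
    have : x ∈ C ⊓ W m := by rw [h]; exact hx
    exact Submodule.disjoint_def.1 hC.disjoint x (Submodule.mem_span_singleton_self x) this.1
  have hsup : Submodule.span F {x} ⊔ (C ⊓ W m) = W m := by
    rw [← sup_inf_assoc_of_le C hxW, hC.sup_eq_top, top_inf_eq]
  rcases key _ hlt1 with ⟨I, hmI, hI⟩ | h
  swap
  · exact h
  rcases key _ hlt2 with ⟨J, hmJ, hJ⟩ | h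
  swap
  · exact h
  exfalso
  have s := Submodule.finrank_sup_add_finrank_inf_eq
    (Submodule.span F {x} ⊔ ⨆ a ∈ I, W a) (C ⊓ W m ⊔ ⨆ a ∈ J, W a)
  have a1 := hW (insert m (I ∪ J))
  have a2 := hW (I ∩ J)
  rw [card_insert_of_notMem (by simp [hmI, hmJ])] at a1
  have c := card_union_add_card_inter I J
  have b1 : (⨆ a ∈ insert m (I ∪ J), W a) ≤
      (Submodule.span F {x} ⊔ ⨆ a ∈ I, W a) ⊔ (C ⊓ W m ⊔ ⨆ a ∈ J, W a) := by
    rw [Finset.iSup_insert, Finset.iSup_union, sup_sup_sup_comm, hsup]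
  have b2 : (⨆ a ∈ I ∩ J, W a) ≤
      (Submodule.span F {x} ⊔ ⨆ a ∈ I, W a) ⊓ (C ⊓ W m ⊔ ⨆ a ∈ J, W a) := by
    refine iSup₂_le fun a ha => le_inf ?_ ?_
    · exact le_sup_of_le_right (le_iSup₂_of_le a (mem_inter.1 ha).1 le_rfl)
    · exact le_sup_of_le_right (le_iSup₂_of_le a (mem_inter.1 ha).2 le_rfl)
  have b1' := Submodule.finrank_mono b1
  have b2' := Submodule.finrank_mono b2
  omega

open Finset in
theorem rado_upper {F V : Type*} [Field F] [AddCommGroup V] [Module F V]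
    [FiniteDimensional F V] {r g : ℕ} (U : Fin 3 → Submodule F V) (col : Fin r → Fin 3)
    (v : Fin g → V) (c : Fin g → Fin 3) (hv : ∀ a, v a ∈ U (c a)) (hli : LinearIndependent F v)
    (hc : ∀ s, #{a | c a = s} ≤ #{m | col m = s}) (I : Finset (Fin r)) :
    g ≤ Module.finrank F ↥(⨆ m ∈ I, U (col m)) + (r - #{a | ∃ b ∈ I, col b = col a}) := by
  classical
  have h1 : #{a | ∃ b ∈ I, col b = c a} ≤ Module.finrank F ↥(⨆ m ∈ I, U (col m)) := by
    have hli' : LinearIndependent F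
        (fun a : {a // a ∈ ({a | ∃ b ∈ I, col b = c a} : Finset (Fin g))} =>
          (⟨v a, by
            obtain ⟨b, hb, hbc⟩ := (mem_filter.1 a.2).2
            refine (le_iSup₂_of_le (f := fun m (_ : m ∈ I) => U (col m)) b hb le_rfl) ?_
            rw [hbc]; exact hv a⟩ : ↥(⨆ m ∈ I, U (col m)))) := by
      apply LinearIndependent.of_comp (Submodule.subtype _)
      exact hli.comp _ Subtype.val_injective
    have := hli'.fintype_card_le_finrank
    rwa [Fintype.card_coe] at this
  have h2 : #{a | ¬ ∃ b ∈ I, col b = c a} ≤ #{a | ¬ ∃ b ∈ I, col b = col a} := by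
    rw [card_eq_sum_card_fiberwise (f := c) (t := univ) (by simp),
      card_eq_sum_card_fiberwise (f := col) (t := univ) (by simp)]
    refine sum_le_sum fun s _ => ?_
    rw [filter_filter, filter_filter]
    by_cases hs : ∃ b ∈ I, col b = s
    · rw [filter_false_of_mem]
      · simp
      · rintro a - ⟨h, rfl⟩; exact h hs
    · refine (card_le_card ?_).trans ((hc s).trans (card_le_card ?_))
      · intro a; simp
      · intro a ha
        have := (mem_filter.1 ha).2
        subst this
        simpa using hs
  have e1 := card_filter_add_card_filter_not (s := (univ : Finset (Fin g)))
    (fun a => ∃ b ∈ I, col b = c a)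
  have e2 := card_filter_add_card_filter_not (s := (univ : Finset (Fin r)))
    (fun a => ∃ b ∈ I, col b = col a)
  simp only [card_univ, Fintype.card_fin] at e1 e2
  omega


/-- The multiset `W` consisting of `i` copies of `U₁`, `j` copies of `U₂` and
`k` copies of `U₃`, indexed by `Fin (i+j+k)`. -/
def repeatedSubspaces {F V : Type*} [Field F] [AddCommGroup V] [Module F V]
    (U₁ U₂ U₃ : Submodule F V) (i j : ℕ) {r : ℕ} : Fin r → Submodule F V :=
  fun m => if (m : ℕ) < i then U₁ else if (m : ℕ) < i + j then U₂ else U₃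

/-- The vector-space König theorem applied to the multiset of `i` copies of
`U₁`, `j` copies of `U₂`, `k` copies of `U₃`: the maximal number of linearly
independent representatives equals the König minimum, and moreover the minimum
is attained at an index set containing all or none of each repeated block. -/
theorem indep_three_subspaces_konig_blocks {F V : Type*} [Field F] [AddCommGroup V]
    [Module F V] [FiniteDimensional F V] (i j k : ℕ) (U₁ U₂ U₃ : Submodule F V)
    (g : ℕ) (hg : IsGreatest (indepChoiceSet U₁ U₂ U₃ i j k) g) :
    letI r := i + j + k
    letI W : Fin r → Submodule F V := repeatedSubspaces U₁ U₂ U₃ i j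
    g = Finset.univ.inf' Finset.univ_nonempty
        (fun I : Finset (Fin r) =>
          Module.finrank F ↥(⨆ m ∈ I, W m) + (r - I.card)) ∧
      ∃ I : Finset (Fin r),
        g = Module.finrank F ↥(⨆ m ∈ I, W m) + (r - I.card) ∧
        (∀ a b : Fin r, (a : ℕ) < i → (b : ℕ) < i → (a ∈ I ↔ b ∈ I)) ∧
        (∀ a b : Fin r, i ≤ (a : ℕ) → (a : ℕ) < i + j → i ≤ (b : ℕ) → (b : ℕ) < i + j →
          (a ∈ I ↔ b ∈ I)) ∧
        (∀ a b : Fin r, i + j ≤ (a : ℕ) → i + j ≤ (b : ℕ) → (a ∈ I ↔ b ∈ I)) := by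
  classical
  generalize hr : i + j + k = r
  generalize hW' : (repeatedSubspaces U₁ U₂ U₃ i j : Fin r → Submodule F V) = W
  let U : Fin 3 → Submodule F V := ![U₁, U₂, U₃]
  let col : Fin r → Fin 3 := fun m => if (m : ℕ) < i then 0 else if (m : ℕ) < i + j then 1 else 2
  have hWc : ∀ m, W m = U (col m) := by
    intro m
    simp only [← hW', repeatedSubspaces, col, U]
    split_ifs <;> rfl
  have k0 : (Finset.univ.filter fun m => col m = 0).card = i := by
    have : (Finset.univ.filter fun m => col m = 0).map Fin.valEmbedding = Finset.Ico 0 i := by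
      ext x
      simp only [Finset.mem_map, Finset.mem_filter, Finset.mem_univ, true_and, Finset.mem_Ico, col,
        Fin.valEmbedding_apply]
      constructor
      · rintro ⟨a, ha, rfl⟩; split_ifs at ha <;> simp_all
      · rintro ⟨h1, h2⟩
        exact ⟨⟨x, by omega⟩, by simp [h2], rfl⟩
    rw [← Finset.card_map Fin.valEmbedding, this]; simp
  have k1 : (Finset.univ.filter fun m => col m = 1).card = j := by
    have : (Finset.univ.filter fun m => col m = 1).map Fin.valEmbedding
        = Finset.Ico i (i + j) := by
      ext x
      simp only [Finset.mem_map, Finset.mem_filter, Finset.mem_univ, true_and, Finset.mem_Ico, col,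
        Fin.valEmbedding_apply]
      constructor
      · rintro ⟨a, ha, rfl⟩; split_ifs at ha <;> simp_all
      · rintro ⟨h1, h2⟩
        exact ⟨⟨x, by omega⟩, by simp [h2, h1], rfl⟩
    rw [← Finset.card_map Fin.valEmbedding, this]; simp
  have k2 : (Finset.univ.filter fun m => col m = 2).card = k := by
    have : (Finset.univ.filter fun m => col m = 2).map Fin.valEmbedding
        = Finset.Ico (i + j) (i + j + k) := by
      ext x
      simp only [Finset.mem_map, Finset.mem_filter, Finset.mem_univ, true_and, Finset.mem_Ico, col,
        Fin.valEmbedding_apply]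
      constructor
      · rintro ⟨a, ha, rfl⟩
        have := a.2
        split_ifs at ha <;> simp_all <;> omega
      · rintro ⟨h1, h2⟩
        exact ⟨⟨x, by omega⟩, by rw [if_neg (by simp; omega), if_neg (by simp; omega)], rfl⟩
    rw [← Finset.card_map Fin.valEmbedding, this]; simp
  let sat : Finset (Fin r) → Finset (Fin r) :=
    fun I => Finset.univ.filter fun a => ∃ b ∈ I, col b = col a
  have hsub : ∀ I, I ⊆ sat I := fun I a ha => by
    simp only [sat, Finset.mem_filter, Finset.mem_univ, true_and]
    exact ⟨a, ha, rfl⟩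
  have hsat : ∀ I, (⨆ m ∈ sat I, W m) = ⨆ m ∈ I, W m := by
    intro I
    apply le_antisymm
    · refine iSup₂_le fun a ha => ?_
      obtain ⟨b, hb, hbc⟩ := (Finset.mem_filter.1 ha).2
      refine le_iSup₂_of_le b hb ?_
      rw [hWc, hWc, hbc]
    · exact iSup₂_le fun a ha => le_iSup₂_of_le a (hsub I ha) le_rfl
  have hup : ∀ I, g ≤ Module.finrank F ↥(⨆ m ∈ I, W m) + (r - (sat I).card) := by
    intro I
    obtain ⟨v, c, h0, h1, h2, c0, c1, c2, hli⟩ := hg.1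
    have := rado_upper U col v c (by
      intro a
      have h0 := h0 a
      have h1 := h1 a
      have h2 := h2 a
      generalize c a = s at *
      fin_cases s
      · exact h0 rfl
      · exact h1 rfl
      · exact h2 rfl) hli (by
      intro s
      fin_cases s
      · exact c0.trans k0.ge
      · exact c1.trans k1.ge
      · exact c2.trans k2.ge) I
    have hWf : W = fun m => U (col m) := funext hWc
    rw [hWf]
    exact this
  have hle : ∀ I : Finset (Fin r), (sat I).card ≤ r ∧ I.card ≤ (sat I).card := fun I =>
    ⟨by simpa using (sat I).card_le_univ, Finset.card_le_card (hsub I)⟩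
  have hlow : ∃ I : Finset (Fin r), Module.finrank F ↥(⨆ m ∈ I, W m) + (r - I.card) ≤ g := by
    by_contra! hcon
    obtain ⟨v, hv, hgv⟩ := rado_defect_s9 (F := F) (g + 1) _ W rfl (by
      intro I
      have := hcon I
      have := hle I
      rw [Fintype.card_fin]
      omega)
    obtain ⟨κ, a, ha, hspan, hli⟩ := exists_linearIndependent' F v
    have : Finite κ := Finite.of_injective a ha
    have := Fintype.ofFinite κ
    have hcard := finrank_span_eq_card hli
    rw [hspan] at hcard
    let e := (Fintype.equivFin κ).symm
    have hcnt : ∀ s, (Finset.univ.filter fun x => col (a (e x)) = s).card ≤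
        (Finset.univ.filter fun m => col m = s).card := by
      intro s
      refine Finset.card_le_card_of_injOn (fun x => a (e x)) ?_ ?_
      · intro x hx; simpa using hx
      · exact (ha.comp e.injective).injOn
    have hmem : Fintype.card κ ∈ indepChoiceSet U₁ U₂ U₃ i j k := by
      refine ⟨fun x => v (a (e x)), fun x => col (a (e x)), ?_, ?_, ?_, (hcnt 0).trans k0.le,
        (hcnt 1).trans k1.le, (hcnt 2).trans k2.le, hli.comp e e.injective⟩
      all_goals
        intro x hx
        have := hv (a (e x))
        rw [hWc, show col (a (e x)) = _ from hx] at this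
        exact this
    have := hg.2 hmem
    omega
  obtain ⟨I, hI⟩ := hlow
  constructor
  · apply le_antisymm
    · refine Finset.le_inf' _ _ fun J _ => ?_
      have := hup J
      have := hle J
      omega
    · exact (Finset.inf'_le _ (Finset.mem_univ I)).trans hI
  · have hb : ∀ a b : Fin r, col a = col b → (a ∈ sat I ↔ b ∈ sat I) := by
      intro a b h
      simp only [sat, Finset.mem_filter, h]
      simp
    refine ⟨sat I, ?_, ?_, ?_, ?_⟩
    · rw [hsat]
      have := hup I
      have := hle I
      omega
    · intro a b h1 h2
      exact hb a b (by simp [col, h1, h2])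
    · intro a b h1 h2 h3 h4
      exact hb a b (by simp only [col]; rw [if_neg (by omega), if_pos h2, if_neg (by omega), if_pos h4])
    · intro a b h1 h2
      exact hb a b (by
        simp only [col]
        rw [if_neg (by omega), if_neg (by omega), if_neg (by omega), if_neg (by omega)])
end

section
/- Let $E \subseteq L, M, N \subseteq t^{-1}E$ be lattices in $\mathcal{K}^n$ where $E = F[[t]]^n$, and let $i+j+k=n$ with $i,j,k \geq 0$. Then there exists a lattice $P$ among $\{tE, L, M, N, L+M, L+N, M+N, L+M+N\}$ such that $f^t_{ijk}(L,M,N) = f^t_{i,j+k}(L,P) + f^t_{j,i+k}(M,P) + f^t_{k,i+j}(N,P) - 2f^t_n(P)$. -/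
noncomputable section

/-- The lattice `tE = ⟨t e 0, …, t e (n-1)⟩`. -/
def tStdLattice (F : Type*) [Field F] (n : ℕ) :
    Submodule (PowerSeries F) (Fin n → LaurentSeries F) :=
  Submodule.span (PowerSeries F)
    (Set.range fun i => Pi.single i (HahnSeries.single 1 (1 : F)))

section Helpers
open Module HahnSeries
theorem rado_aux {F E : Type*} [Field F] [AddCommGroup E] [Module F E] [FiniteDimensional F E]
    {ι : Type*} [Fintype ι] [DecidableEq ι] (r : ℕ) (s : ℕ) : ∀ (V : ι → Submodule F E),
    (∑ m, finrank F (V m) = s) →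
    (∀ T : Finset ι, r + T.card ≤ finrank F (T.sup V : Submodule F E) + Fintype.card ι) →
    ∃ w : ι → E, (∀ m, w m ∈ V m) ∧ r ≤ finrank F (Submodule.span F (Set.range w)) := by
  induction s using Nat.strong_induction_on with
  | _ s ih =>
  intro V hs hV
  by_cases h1 : ∀ m, finrank F (V m) ≤ 1
  · have : ∀ m, ∃ v ∈ V m, V m = Submodule.span F {v} := by
      intro m
      obtain ⟨v, hv⟩ := finrank_le_one_iff.1 (h1 m)
      refine ⟨v, v.2, le_antisymm ?_ ?_⟩
      · intro x hx
        obtain ⟨c, hc⟩ := hv ⟨x, hx⟩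
        rw [Submodule.mem_span_singleton]
        exact ⟨c, congrArg Subtype.val hc⟩
      · rw [Submodule.span_singleton_le_iff_mem]; exact v.2
    choose w hw hw2 using this
    refine ⟨w, hw, ?_⟩
    have h := hV Finset.univ
    have e : (Finset.univ.sup V : Submodule F E) = Submodule.span F (Set.range w) := by
      rw [Finset.sup_univ_eq_iSup, Submodule.span_range_eq_iSup]
      exact iSup_congr hw2
    rw [e, Finset.card_univ] at h
    omega
  · push Not at h1
    obtain ⟨m, hm⟩ := h1
    obtain ⟨U1, U2, hU1, hU2, hU⟩ : ∃ U1 U2 : Submodule F E, U1 < V m ∧ U2 < V m ∧ U1 ⊔ U2 = V m := by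
      have hne : V m ≠ ⊥ := by
        intro h; rw [h] at hm; simp at hm
      obtain ⟨v, hv, hv0⟩ := Submodule.exists_mem_ne_zero_of_ne_bot hne
      have hle : Submodule.span F {v} ≤ V m := by
        rwa [Submodule.span_singleton_le_iff_mem]
      obtain ⟨C, hC⟩ := Submodule.exists_isCompl (Submodule.span F {v})
      refine ⟨Submodule.span F {v}, C ⊓ V m, lt_of_le_of_ne hle ?_, lt_of_le_of_ne inf_le_right ?_, ?_⟩
      · intro h
        rw [← h, finrank_span_singleton hv0] at hm; omega
      · intro h
        have : v ∈ C := (h.ge hv).1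
        have h2 := hC.disjoint
        rw [Submodule.disjoint_def] at h2
        exact hv0 (h2 v (Submodule.mem_span_singleton_self v) this)
      · rw [← sup_inf_assoc_of_le C hle, hC.sup_eq_top, top_inf_eq]
    have key : ∀ U : Submodule F E, U < V m →
        (∀ T : Finset ι, r + T.card ≤ finrank F (T.sup (Function.update V m U) : Submodule F E) + Fintype.card ι) →
        ∃ w : ι → E, (∀ m, w m ∈ V m) ∧ r ≤ finrank F (Submodule.span F (Set.range w)) := by
      intro U hUV hT
      have hle : ∀ x, Function.update V m U x ≤ V x := by
        intro x
        by_cases hx : x = m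
        · subst hx; simpa using hUV.le
        · simp [hx]
      obtain ⟨w, hw, hr⟩ := ih (∑ x, finrank F (Function.update V m U x)) (by
        rw [← hs]
        refine Finset.sum_lt_sum (fun x _ => Submodule.finrank_mono (hle x)) ⟨m, Finset.mem_univ _, ?_⟩
        rw [Function.update_self]
        exact Submodule.finrank_lt_finrank_of_lt hUV) _ rfl hT
      exact ⟨w, fun x => hle x (hw x), hr⟩
    by_contra hcon
    have bad : ∀ U : Submodule F E, U < V m → ∃ T : Finset ι, m ∉ T ∧
        finrank F (U ⊔ T.sup V : Submodule F E) + Fintype.card ι < r + T.card + 1 := by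
      intro U hUV
      by_contra h
      push Not at h
      apply hcon
      apply key U hUV
      intro T
      have hsup : ∀ T' : Finset ι, m ∉ T' → T'.sup (Function.update V m U) = T'.sup V := by
        intro T' hT'
        apply Finset.sup_congr rfl
        intro x hx
        rw [Function.update_of_ne]
        rintro rfl; exact hT' hx
      by_cases hmT : m ∈ T
      · have h3 := h (T.erase m) (Finset.notMem_erase _ _)
        rw [← Finset.insert_erase hmT, Finset.sup_insert, hsup _ (Finset.notMem_erase _ _),
          Finset.card_insert_of_notMem (Finset.notMem_erase _ _)]
        rw [Function.update_self]
        omega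
      · rw [hsup T hmT]; exact hV T
    obtain ⟨T1, hm1, hT1⟩ := bad U1 hU1
    obtain ⟨T2, hm2, hT2⟩ := bad U2 hU2
    have hsub := Submodule.finrank_sup_add_finrank_inf_eq (U1 ⊔ T1.sup V) (U2 ⊔ T2.sup V)
    have ha : finrank F ((insert m (T1 ∪ T2)).sup V : Submodule F E) ≤
        finrank F ((U1 ⊔ T1.sup V) ⊔ (U2 ⊔ T2.sup V) : Submodule F E) := by
      apply Submodule.finrank_mono
      rw [Finset.sup_insert, Finset.sup_union, ← hU]
      apply le_of_eq; ac_rfl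
    have hb : finrank F ((T1 ∩ T2).sup V : Submodule F E) ≤
        finrank F ((U1 ⊔ T1.sup V) ⊓ (U2 ⊔ T2.sup V) : Submodule F E) := by
      apply Submodule.finrank_mono
      exact le_inf (le_trans (Finset.sup_mono Finset.inter_subset_left) le_sup_right)
        (le_trans (Finset.sup_mono Finset.inter_subset_right) le_sup_right)
    have hc := hV (insert m (T1 ∪ T2))
    have hd := hV (T1 ∩ T2)
    rw [Finset.card_insert_of_notMem (by simp [hm1, hm2])] at hc
    have := Finset.card_union_add_card_inter T1 T2
    omega

theorem rado_col {F E : Type*} [Field F] [AddCommGroup E] [Module F E] [FiniteDimensional F E]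
    {ι κ : Type*} [Fintype ι] [DecidableEq ι] [DecidableEq κ] (r : ℕ)
    (c : ι → κ) (W : κ → Submodule F E)
    (h : ∀ S : Finset κ, r ≤ finrank F (S.sup W : Submodule F E) + (Finset.univ.filter fun m => c m ∉ S).card) :
    ∃ w : ι → E, (∀ m, w m ∈ W (c m)) ∧ r ≤ finrank F (Submodule.span F (Set.range w)) := by
  apply rado_aux r _ (fun m => W (c m)) rfl
  intro T
  have h1 := h (T.image c)
  rw [Finset.sup_image] at h1
  have h2 : (Finset.univ.filter fun m => c m ∉ T.image c).card + T.card ≤ Fintype.card ι := by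
    rw [← Finset.card_union_of_disjoint]
    · exact Finset.card_le_univ _
    · rw [Finset.disjoint_left]
      intro x hx hT
      simp only [Finset.mem_filter] at hx
      exact hx.2 (Finset.mem_image_of_mem c hT)
  have : (W ∘ c) = fun m => W (c m) := rfl
  rw [this] at h1
  omega

theorem rank_ub {F E : Type*} [Field F] [AddCommGroup E] [Module F E] [FiniteDimensional F E]
    {ι κ : Type*} [Fintype ι] [DecidableEq ι] [DecidableEq κ]
    (c : ι → κ) (W : κ → Submodule F E) (S : Finset κ) (w : ι → E) (hw : ∀ m, w m ∈ W (c m)) :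
    finrank F (Submodule.span F (Set.range w)) ≤
     finrank F (S.sup W : Submodule F E) + (Finset.univ.filter fun m => c m ∉ S).card := by
  classical
  have h1 : Submodule.span F (Set.range w) ≤ S.sup W ⊔
      Submodule.span F (((Finset.univ.filter fun m => c m ∉ S).image fun m => w m : Finset E) : Set E) := by
    classical
    rw [Submodule.span_le]
    rintro _ ⟨m, rfl⟩
    by_cases hm : c m ∈ S
    · exact Submodule.mem_sup_left (Finset.le_sup (f := W) hm (hw m))
    · apply Submodule.mem_sup_right
      apply Submodule.subset_span
      simp only [Finset.coe_image, Set.mem_image]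
      exact ⟨m, by simpa using hm, rfl⟩
  refine (Submodule.finrank_mono h1).trans ((Submodule.finrank_add_le_finrank_add_finrank _ _).trans ?_)
  gcongr
  exact (finrank_span_finset_le_card _).trans Finset.card_image_le

/-- From `w` of rank `r`, complete to a basis, keeping multiples of `w` on a set of size `r`. -/
theorem complete {F : Type*} [Field F] {n : ℕ} (w : Fin n → Fin n → F) (r : ℕ)
    (hr : finrank F (Submodule.span F (Set.range w)) = r) :
    ∃ (I : Finset (Fin n)) (u : Fin n → Fin n → F), I.card = r ∧ LinearIndependent F u ∧
      ∀ m ∈ I, ∃ a : F, u m = a • w m := by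
  obtain ⟨κ, a, ha, hsp, hli⟩ := exists_linearIndependent' F w
  have : Finite κ := Finite.of_injective a ha
  have := Fintype.ofFinite κ
  let I : Finset (Fin n) := Finset.univ.image a
  have hI : I.card = r := by
    rw [← hr, ← hsp, finrank_span_eq_card hli, Finset.card_image_of_injective _ ha, Finset.card_univ]
  have hliI : LinearIndepOn F w (I : Set (Fin n)) := by
    have := (linearIndepOn_range_iff ha w).2 hli
    simpa [I] using this
  obtain ⟨u, hu, hn⟩ := rado_aux (F := F) (E := Fin n → F) (ι := Fin n) n _
    (fun m => if m ∈ I then Submodule.span F {w m} else ⊤) rfl (by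
      intro T
      rw [Fintype.card_fin]
      by_cases hT : T ⊆ I
      · have e : T.sup (fun m => if m ∈ I then Submodule.span F {w m} else ⊤) =
            Submodule.span F (Set.range fun m : T => w m) := by
          rw [Submodule.span_range_eq_iSup, Finset.sup_eq_iSup, iSup_subtype']
          exact iSup_congr fun m => by simp [hT m.2]
        have h3 : LinearIndependent F (fun m : T => w m) := hliI.mono hT
        rw [e, finrank_span_eq_card h3]
        simp [add_comm]
      · obtain ⟨x, hx, hxI⟩ := Finset.not_subset.1 hT
        have e : T.sup (fun m => if m ∈ I then Submodule.span F {w m} else ⊤) = ⊤ := by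
          rw [eq_top_iff]
          have := Finset.le_sup (f := fun m => if m ∈ I then Submodule.span F {w m} else ⊤) hx
          simpa [hxI] using this
        rw [e, finrank_top, finrank_fin_fun]
        have := Finset.card_le_univ T
        simp at this
        omega)
  refine ⟨I, u, hI, ?_, ?_⟩
  · rw [linearIndependent_iff_card_le_finrank_span]
    simpa [Set.finrank] using hn
  · intro m hm
    have := hu m
    simp only [hm, if_true, Submodule.mem_span_singleton] at this
    obtain ⟨a, h⟩ := this
    exact ⟨a, h.symm⟩

theorem prod_single {F ι : Type*} [Field F] (s : Finset ι) (d : ι → ℤ) :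
    ∏ m ∈ s, (single (d m) (1 : F) : LaurentSeries F) = single (∑ m ∈ s, d m) 1 := by
  classical
  induction s using Finset.induction_on with
  | empty => simp
  | insert a s h ih => rw [Finset.prod_insert h, Finset.sum_insert h, ih, single_mul_single, one_mul]

theorem det_eq {F : Type*} [Field F] {n : ℕ} (v : Fin n → Fin n → LaurentSeries F)
    (Y : Matrix (Fin n) (Fin n) (PowerSeries F)) (d : Fin n → ℤ)
    (hv : ∀ m p, v m p = single (d m) 1 * (Y p m : LaurentSeries F)) :
    (Matrix.of fun p m => v m p).det = single (∑ m, d m) 1 * (Y.det : LaurentSeries F) := by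
  have : (Matrix.of fun p m => v m p) = Matrix.of fun p m => single (d m) (1 : F) *
      ((ofPowerSeries ℤ F).mapMatrix Y p m) := by
    ext p m : 2
    simp [hv]
  rw [this, Matrix.det_mul_row, prod_single, RingHom.map_det]

theorem order_coe_nonneg {F : Type*} [Field F] (f : PowerSeries F) (hf : (f : LaurentSeries F) ≠ 0) :
    0 ≤ (f : LaurentSeries F).order := by
  by_contra h
  push Not at h
  have h1 : (f : LaurentSeries F).coeff (f : LaurentSeries F).order ≠ 0 := coeff_order_eq_zero.not.2 hf
  apply h1
  rw [PowerSeries.coeff_coe, if_pos h]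

theorem order_lb {F : Type*} [Field F] {n : ℕ} (v : Fin n → Fin n → LaurentSeries F)
    (Y : Matrix (Fin n) (Fin n) (PowerSeries F)) (d : Fin n → ℤ)
    (hv : ∀ m p, v m p = single (d m) 1 * (Y p m : LaurentSeries F)) (k : ℕ)
    (hk : PowerSeries.X ^ k ∣ Y.det)
    (h0 : (Matrix.of fun p m => v m p).det ≠ 0) :
    ∑ m, d m + k ≤ ((Matrix.of fun p m => v m p).det).order := by
  rw [det_eq v Y d hv] at h0 ⊢
  obtain ⟨g, hg⟩ := hk
  have h1 := right_ne_zero_of_mul h0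
  rw [order_single_mul_of_isRegular isRegular_one h1]
  have h2 : (Y.det : LaurentSeries F) = single (k : ℤ) 1 * (g : LaurentSeries F) := by
    rw [hg, map_mul, map_pow, ofPowerSeries_X, single_pow]; simp
  rw [h2] at h1 ⊢
  have h3 := right_ne_zero_of_mul h1
  rw [order_single_mul_of_isRegular isRegular_one h3]
  have := order_coe_nonneg g h3
  omega

theorem order_exact {F : Type*} [Field F] {n : ℕ} (u : Fin n → Fin n → F)
    (hu : LinearIndependent F u) (d : Fin n → ℤ) :
    (Matrix.of fun p m => (single (d m) (u m p) : LaurentSeries F)).det ≠ 0 ∧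
    ((Matrix.of fun p m => (single (d m) (u m p) : LaurentSeries F)).det).order = ∑ m, d m := by
  have hdet : (Matrix.of fun p m => u m p : Matrix (Fin n) (Fin n) F).det ≠ 0 := by
    have : LinearIndependent F (Matrix.of u).row := hu
    rw [Matrix.linearIndependent_rows_iff_isUnit, Matrix.isUnit_iff_isUnit_det] at this
    rw [← Matrix.det_transpose] at this
    exact this.ne_zero
  have e := det_eq (fun m p => (single (d m) (u m p) : LaurentSeries F))
    ((PowerSeries.C (R := F)).mapMatrix (Matrix.of fun p m => u m p)) d (by
      intro m p; simp [C_apply])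
  rw [e, ← RingHom.map_det, ofPowerSeries_C, C_apply, single_mul_single]
  simp only [one_mul, add_zero]
  exact ⟨single_ne_zero hdet, order_single hdet⟩

theorem X_pow_dvd_det {F : Type*} [Field F] {n : ℕ} (Y : Matrix (Fin n) (Fin n) (PowerSeries F)) (r : ℕ)
    (hr : finrank F (Submodule.span F (Set.range fun m p => PowerSeries.constantCoeff (Y p m))) = r) :
    PowerSeries.X ^ (n - r) ∣ Y.det := by
  set U := Submodule.span F (Set.range fun m p => PowerSeries.constantCoeff (Y p m)) with hU
  obtain ⟨U', hc⟩ := Submodule.exists_isCompl U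
  have hfr : finrank F U + finrank F U' = n := by
    have := Submodule.finrank_add_eq_of_isCompl hc
    simpa using this
  let b0 := ((finBasis F U).prod (finBasis F U')).map (Submodule.prodEquivOfIsCompl U U' hc)
  let e : Fin (finrank F U) ⊕ Fin (finrank F U') ≃ Fin n := finSumFinEquiv.trans (finCongr hfr)
  let b := b0.reindex e
  have hb : ∀ x ∈ U, ∀ q, b.repr x (e (Sum.inr q)) = 0 := by
    intro x hx q
    simp [b, b0, Submodule.prodEquivOfIsCompl_symm_apply_left _ _ hc ⟨x, hx⟩]
  let Q : Matrix (Fin n) (Fin n) F := b.toMatrix (Pi.basisFun F (Fin n))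
  let Q' : Matrix (Fin n) (Fin n) F := (Pi.basisFun F (Fin n)).toMatrix b
  have hQ : Q' * Q = 1 := Basis.toMatrix_mul_toMatrix_flip _ _
  have hZ : ∀ q m, PowerSeries.X ∣ ((PowerSeries.C (R := F)).mapMatrix Q * Y) (e (Sum.inr q)) m := by
    intro q m
    rw [PowerSeries.X_dvd_iff, Matrix.mul_apply, map_sum]
    have h := hb _ (Submodule.subset_span ⟨m, rfl⟩) q
    have h2 := congrFun (Basis.toMatrix_mulVec_repr (b := Pi.basisFun F (Fin n)) (b' := b) (fun p => PowerSeries.constantCoeff (Y p m))) (e (Sum.inr q))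
    have h := h2.trans h
    rw [← h]
    simp [Matrix.mulVec, dotProduct, Q]
  have hdet : Y.det = ((PowerSeries.C (R := F)).mapMatrix Q').det * ((PowerSeries.C (R := F)).mapMatrix Q * Y).det := by
    rw [← Matrix.det_mul, ← Matrix.mul_assoc, ← map_mul, hQ, map_one, one_mul]
  rw [hdet]
  apply Dvd.dvd.mul_left
  have hZ2 : ∀ q m, ∃ z, ((PowerSeries.C (R := F)).mapMatrix Q * Y) q m =
      (if (e.symm q).isRight then PowerSeries.X else 1) * z := by
    intro q m
    obtain ⟨q, rfl⟩ := e.surjective q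
    rcases q with q | q
    · exact ⟨_, by simp; rfl⟩
    · obtain ⟨z, hz⟩ := hZ q m
      exact ⟨z, by rw [hz]; simp⟩
  choose Z hZ3 using hZ2
  have : (PowerSeries.C (R := F)).mapMatrix Q * Y = Matrix.of fun q m =>
      (if (e.symm q).isRight then PowerSeries.X else 1) * Z q m := by
    ext1 q m; exact hZ3 q m
  rw [this, Matrix.det_mul_column (fun q => if (e.symm q).isRight then PowerSeries.X else 1) Z, ← Equiv.prod_comp e]
  simp only [Equiv.symm_apply_apply, Fintype.prod_sum_type]
  apply Dvd.dvd.mul_right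
  have : n - r = finrank F U' := by omega
  simp [this]


theorem mem_span_single {F : Type*} [Field F] {n : ℕ} (d : ℤ) (x : Fin n → LaurentSeries F) :
    x ∈ Submodule.span (PowerSeries F)
      (Set.range fun i : Fin n => (Pi.single i (single d (1 : F)) : Fin n → LaurentSeries F)) ↔
    ∃ y : Fin n → PowerSeries F, ∀ p, x p = single d 1 * (y p : LaurentSeries F) := by
  have e : ∀ (c : Fin n → PowerSeries F) p,
      (∑ i, c i • (Pi.single i (single d (1 : F)) : Fin n → LaurentSeries F)) p =
      single d 1 * (c p : LaurentSeries F) := by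
    intro c p
    rw [Finset.sum_apply, Finset.sum_eq_single p]
    · rw [Pi.smul_apply, Pi.single_eq_same, Algebra.smul_def, mul_comm]; rfl
    · intro q _ hq
      rw [Pi.smul_apply, Pi.single_eq_of_ne hq.symm, smul_zero]
    · simp
  rw [Submodule.mem_span_range_iff_exists_fun]
  constructor
  · rintro ⟨c, rfl⟩
    exact ⟨c, e c⟩
  · rintro ⟨y, hy⟩
    exact ⟨y, by ext1 p; rw [e, hy]⟩

theorem mem_tInv {F : Type*} [Field F] {n : ℕ} (x : Fin n → LaurentSeries F) :
    x ∈ tInvStdLattice F n ↔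
    ∃ y : Fin n → PowerSeries F, ∀ p, x p = single (-1) 1 * (y p : LaurentSeries F) :=
  mem_span_single _ x

theorem mem_tStd {F : Type*} [Field F] {n : ℕ} (x : Fin n → LaurentSeries F) :
    x ∈ tStdLattice F n ↔
    ∃ y : Fin n → PowerSeries F, ∀ p, x p = single 1 1 * (y p : LaurentSeries F) :=
  mem_span_single _ x

theorem mem_std {F : Type*} [Field F] {n : ℕ} (x : Fin n → LaurentSeries F) :
    x ∈ stdLattice F n ↔
    ∃ y : Fin n → PowerSeries F, ∀ p, x p = (y p : LaurentSeries F) := by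
  have := mem_span_single 0 x
  simpa [stdLattice] using this

/-- Residue subspace of a lattice. -/
def Rs {F : Type*} [Field F] {n : ℕ}
    (L : Submodule (PowerSeries F) (Fin n → LaurentSeries F)) : Submodule F (Fin n → F) where
  carrier := {w | (fun p => (single (-1) (w p) : LaurentSeries F)) ∈ L}
  add_mem' := by
    intro a b ha hb
    have := L.add_mem ha hb
    show _ ∈ L
    convert this using 1
    ext1 p; simp
  zero_mem' := by
    have := L.zero_mem
    show _ ∈ L
    convert this using 1
    ext1 p; simp
  smul_mem' := by
    intro a w hw
    have := L.smul_mem (PowerSeries.C a) hw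
    show _ ∈ L
    convert this using 1
    ext1 p
    rw [Pi.smul_apply, Pi.smul_apply, Algebra.smul_def (A := LaurentSeries F), LaurentSeries.coe_algebraMap, ofPowerSeries_C, C_apply,
      single_mul_single]
    simp

theorem mem_Rs {F : Type*} [Field F] {n : ℕ}
    (L : Submodule (PowerSeries F) (Fin n → LaurentSeries F)) (w : Fin n → F) :
    w ∈ Rs L ↔ (fun p => (single (-1) (w p) : LaurentSeries F)) ∈ L := Iff.rfl

theorem Rs_mono {F : Type*} [Field F] {n : ℕ}
    {L M : Submodule (PowerSeries F) (Fin n → LaurentSeries F)} (h : L ≤ M) : Rs L ≤ Rs M :=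
  fun _ hw => h hw

theorem cc_mem_Rs {F : Type*} [Field F] {n : ℕ}
    {L : Submodule (PowerSeries F) (Fin n → LaurentSeries F)} (hE : stdLattice F n ≤ L)
    {x : Fin n → LaurentSeries F} (hx : x ∈ L) (y : Fin n → PowerSeries F)
    (hy : ∀ p, x p = single (-1) 1 * (y p : LaurentSeries F)) :
    (fun p => PowerSeries.constantCoeff (y p)) ∈ Rs L := by
  have hz : ∀ p, ∃ z : PowerSeries F, y p = PowerSeries.C (PowerSeries.constantCoeff (y p)) + PowerSeries.X * z := by
    intro p
    have : PowerSeries.X ∣ y p - PowerSeries.C (PowerSeries.constantCoeff (y p)) := by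
      rw [PowerSeries.X_dvd_iff]; simp
    obtain ⟨z, hz⟩ := this
    exact ⟨z, by rw [← hz]; ring⟩
  choose z hz using hz
  have h1 : (fun p => (z p : LaurentSeries F)) ∈ L := hE ((mem_std _).2 ⟨z, fun _ => rfl⟩)
  rw [mem_Rs]
  convert L.sub_mem hx h1 using 1
  ext1 p
  rw [Pi.sub_apply, hy]
  conv_rhs => rw [hz p]
  rw [map_add, map_mul, ofPowerSeries_C, ofPowerSeries_X, C_apply, mul_add, ← mul_assoc,
    single_mul_single, single_mul_single]
  simp

theorem Rs_sup {F : Type*} [Field F] {n : ℕ}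
    {L M : Submodule (PowerSeries F) (Fin n → LaurentSeries F)} (hL : stdLattice F n ≤ L)
    (hM : stdLattice F n ≤ M) (hL' : L ≤ tInvStdLattice F n) (hM' : M ≤ tInvStdLattice F n) :
    Rs (L ⊔ M) = Rs L ⊔ Rs M := by
  apply le_antisymm
  · intro w hw
    rw [mem_Rs, Submodule.mem_sup] at hw
    obtain ⟨l, hl, m, hm, h⟩ := hw
    obtain ⟨y, hy⟩ := (mem_tInv l).1 (hL' hl)
    obtain ⟨z, hz⟩ := (mem_tInv m).1 (hM' hm)
    have h1 := cc_mem_Rs hL hl y hy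
    have h2 := cc_mem_Rs hM hm z hz
    rw [Submodule.mem_sup]
    refine ⟨_, h1, _, h2, ?_⟩
    ext p
    have h3 := congrFun h p
    simp only [Pi.add_apply, hy, hz] at h3 ⊢
    have h4 := congrArg (fun f => single 1 (1:F) * f) h3
    simp only [mul_add, ← mul_assoc, single_mul_single] at h4
    simp only [add_neg_cancel, mul_one, single_zero_one, one_mul] at h4
    have h5 : ofPowerSeries ℤ F (y p + z p) = ofPowerSeries ℤ F (PowerSeries.C (w p)) := by
      rw [map_add, h4, ofPowerSeries_C, C_apply]
    have h6 := ofPowerSeries_injective h5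
    have h7 := congrArg PowerSeries.constantCoeff h6
    simpa using h7
  · exact sup_le (Rs_mono le_sup_left) (Rs_mono le_sup_right)

theorem greatest_col {F : Type*} [Field F] {n : ℕ} {κ : Type*} [DecidableEq κ]
    (c : Fin n → κ) (X : κ → Submodule (PowerSeries F) (Fin n → LaurentSeries F))
    (hE : ∀ a, stdLattice F n ≤ X a) (hT : ∀ a, X a ≤ tInvStdLattice F n) (r : ℕ)
    (h : ∀ S : Finset κ, r ≤ finrank F (S.sup (fun a => Rs (X a)) : Submodule F (Fin n → F)) +
      (Finset.univ.filter fun m => c m ∉ S).card)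
    (S : Finset κ) (hS : finrank F (S.sup (fun a => Rs (X a)) : Submodule F (Fin n → F)) +
      (Finset.univ.filter fun m => c m ∉ S).card = r) :
    IsGreatest (detValSet (fun m => X (c m))) (r : ℤ) := by
  constructor
  · obtain ⟨w, hw, hr⟩ := rado_col r c (fun a => Rs (X a)) h
    have hr2 := rank_ub c (fun a => Rs (X a)) S w hw
    obtain ⟨I, u, hI, hu, hIw⟩ := complete w r (by omega)
    let d : Fin n → ℤ := fun m => if m ∈ I then -1 else 0
    obtain ⟨h1, h2⟩ := order_exact u hu d
    refine ⟨fun m p => single (d m) (u m p), ?_, h1, ?_⟩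
    · intro m
      by_cases hm : m ∈ I
      · obtain ⟨a, ha⟩ := hIw m hm
        have := (Rs (X (c m))).smul_mem a (hw m)
        rw [← ha, mem_Rs] at this
        simpa [d, hm] using this
      · apply hE
        rw [mem_std]
        refine ⟨fun p => PowerSeries.C (u m p), fun p => ?_⟩
        simp [d, hm, C_apply]
    · rw [h2]
      simp [d, hI]
  · rintro z ⟨v, hv, h0, rfl⟩
    have : ∀ m, ∃ y : Fin n → PowerSeries F, ∀ p, v m p = single (-1) 1 * (y p : LaurentSeries F) :=
      fun m => (mem_tInv _).1 (hT _ (hv m))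
    choose y hy using this
    have h1 := rank_ub c (fun a => Rs (X a)) S (fun m p => PowerSeries.constantCoeff (y m p))
      (fun m => cc_mem_Rs (hE _) (hv m) (y m) (hy m))
    obtain ⟨ρ, hρ⟩ : ∃ ρ, finrank F (Submodule.span F
      (Set.range fun m p => PowerSeries.constantCoeff (y m p))) = ρ := ⟨_, rfl⟩
    rw [hρ, hS] at h1
    have h2 := order_lb v (Matrix.of fun p m => y m p) (fun _ => -1) (fun m p => hy m p) _
      (X_pow_dvd_det (Matrix.of fun p m => y m p) ρ hρ) h0
    simp only [Finset.sum_const, Finset.card_univ, Fintype.card_fin] at h2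
    rw [nsmul_eq_mul] at h2
    omega

theorem card_lt {n i : ℕ} (hi : i ≤ n) : (Finset.univ.filter fun m : Fin n => (m : ℕ) < i).card = i := by
  rw [Fin.card_filter_val_lt]; omega

theorem greatest_two {F : Type*} [Field F] {n : ℕ}
    (L P : Submodule (PowerSeries F) (Fin n → LaurentSeries F))
    (hL : stdLattice F n ≤ L) (hP : stdLattice F n ≤ P)
    (hL' : L ≤ tInvStdLattice F n) (hP' : P ≤ tInvStdLattice F n) (i : ℕ) (hi : i ≤ n) (r : ℕ)
    (h1 : r ≤ finrank F (Rs L) + (n - i)) (h2 : r ≤ finrank F (Rs P) + i)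
    (h3 : r ≤ finrank F (Rs L ⊔ Rs P : Submodule F (Fin n → F))) 
    (h4 : r = finrank F (Rs P) + i ∨ r = finrank F (Rs L ⊔ Rs P : Submodule F (Fin n → F))) :
    IsGreatest (detValSet (cols2 L P i)) (r : ℤ) := by
  have hn : r ≤ n := by
    refine h3.trans ((Submodule.finrank_le _).trans ?_); simp
  have e : cols2 L P i = fun m : Fin n => (fun b : Bool => if b then L else P) (decide ((m : ℕ) < i)) := by
    ext1 m; simp [cols2]
  have c1 := card_lt hi
  have c2 := Finset.card_filter_add_card_filter_not (s := Finset.univ) (fun m : Fin n => (m : ℕ) < i)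
  rw [c1, Finset.card_univ, Fintype.card_fin] at c2
  have c2 : (Finset.univ.filter fun m : Fin n => ¬ (m : ℕ) < i).card = n - i := by omega
  have c2' : (Finset.univ.filter fun m : Fin n => i ≤ (m : ℕ)).card = n - i := by simpa using c2
  have key : ∀ q : Finset Bool → Prop, q ∅ → q {true} → q {false} → q {true, false} → ∀ S, q S := by
    intro q a b c d S
    have : S = ∅ ∨ S = {true} ∨ S = {false} ∨ S = {true, false} := by revert S; decide
    rcases this with rfl | rfl | rfl | rfl <;> assumption
  rw [e]
  have st : (({true} : Finset Bool).sup (fun a => Rs (if a then L else P)) : Submodule F (Fin n → F)) = Rs L := by simp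
  have sf : (({false} : Finset Bool).sup (fun a => Rs (if a then L else P)) : Submodule F (Fin n → F)) = Rs P := by simp
  have stf : (({true, false} : Finset Bool).sup (fun a => Rs (if a then L else P)) : Submodule F (Fin n → F)) = Rs L ⊔ Rs P := by simp
  have ctf : (Finset.univ.filter fun m : Fin n => decide ((m : ℕ) < i) ∉ ({true, false} : Finset Bool)).card = 0 := by
    rw [Finset.card_eq_zero, Finset.filter_eq_empty_iff]; intro m _; generalize decide ((m : ℕ) < i) = z; revert z; decide
  have hh : ∀ S : Finset Bool, r ≤ finrank F (S.sup (fun a => Rs (if a then L else P)) : Submodule F (Fin n → F)) +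
      (Finset.univ.filter fun m : Fin n => decide ((m : ℕ) < i) ∉ S).card := by
    apply key
    · have := hn; simp only [Finset.notMem_empty, not_false_eq_true, Finset.filter_true, Finset.card_univ, Fintype.card_fin]; omega
    · rw [st]; simp only [Finset.mem_singleton, decide_eq_true_eq, c2]; omega
    · rw [sf]; simp only [Finset.mem_singleton, decide_eq_false_iff_not, not_not, c1]; omega
    · rw [stf]; omega
  rcases h4 with h4 | h4
  · exact greatest_col _ _ (by simp [hL, hP]) (by simp [hL', hP']) r hh {false} (by
      rw [sf]; simp only [Finset.mem_singleton, decide_eq_false_iff_not, not_not, c1]; omega)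
  · exact greatest_col _ _ (by simp [hL, hP]) (by simp [hL', hP']) r hh {true, false} (by
      rw [stf, ctf]; omega)

theorem greatest_const {F : Type*} [Field F] {n : ℕ}
    (P : Submodule (PowerSeries F) (Fin n → LaurentSeries F))
    (hP : stdLattice F n ≤ P) (hP' : P ≤ tInvStdLattice F n) :
    IsGreatest (detValSet (fun _ => P)) (finrank F (Rs P) : ℤ) := by
  have := greatest_two P P hP hP hP' hP' 0 (Nat.zero_le _) (finrank F (Rs P)) (by omega) (by omega)
    (by rw [sup_idem]) (Or.inl rfl)
  have e : cols2 P P 0 = fun _ : Fin n => P := by ext1 m; simp [cols2]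
  rwa [e] at this

theorem greatest_three {F : Type*} [Field F] {n : ℕ} (i j k : ℕ)
    (hijk : i + j + k = n)
    (L M N : Submodule (PowerSeries F) (Fin n → LaurentSeries F))
    (hEL : stdLattice F n ≤ L) (hEM : stdLattice F n ≤ M) (hEN : stdLattice F n ≤ N)
    (hLt : L ≤ tInvStdLattice F n) (hMt : M ≤ tInvStdLattice F n)
    (hNt : N ≤ tInvStdLattice F n) (g : Fin 8 → ℕ)
    (hg : g = fun y => finrank F ((![⊥, Rs L, Rs M, Rs N, Rs L ⊔ Rs M, Rs L ⊔ Rs N, Rs M ⊔ Rs N,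
      Rs L ⊔ Rs M ⊔ Rs N] : Fin 8 → Submodule F (Fin n → F)) y) +
      (![n, j + k, i + k, i + j, k, j, i, 0] : Fin 8 → ℕ) y)
    (x : Fin 8) (hx : ∀ y, g x ≤ g y) :
    IsGreatest (detValSet (cols3 L M N i j)) (g x : ℤ) := by
  have e : cols3 L M N i j = fun m : Fin n => (![L, M, N] : Fin 3 → _)
      (if (m : ℕ) < i then 0 else if (m : ℕ) < i + j then 1 else 2) := by
    ext1 m
    unfold cols3
    split_ifs <;> rfl
  set c : Fin n → Fin 3 := fun m => (if (m : ℕ) < i then 0 else if (m : ℕ) < i + j then 1 else 2) with hc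
  have k0 : (Finset.univ.filter fun m => c m = 0).card = i := by
    rw [← card_lt (n := n) (i := i) (by omega)]
    congr 1; ext m; simp only [hc, Finset.mem_filter]; split_ifs <;> simp_all
  have k01 : (Finset.univ.filter fun m => c m = 0 ∨ c m = 1).card = i + j := by
    rw [← card_lt (n := n) (i := i + j) (by omega)]
    congr 1; ext m; simp only [hc, Finset.mem_filter]; split_ifs <;> simp_all; omega
  have k1 : (Finset.univ.filter fun m => c m = 1).card = j := by
    rw [Finset.filter_or, Finset.card_union_of_disjoint] at k01
    · omega
    · rw [Finset.disjoint_filter]; intro m _ h; simp [h]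
  have k2 : (Finset.univ.filter fun m => c m = 2).card = k := by
    have h := Finset.card_filter_add_card_filter_not (s := Finset.univ) (fun m => c m = 0 ∨ c m = 1)
    rw [k01, Finset.card_univ, Fintype.card_fin] at h
    have : (Finset.univ.filter fun m => ¬ (c m = 0 ∨ c m = 1)) = Finset.univ.filter fun m => c m = 2 := by
      ext m; simp only [Finset.mem_filter, Finset.mem_univ, true_and]
      generalize c m = z
      revert z; decide
    rw [this] at h
    omega
  have cnt : ∀ S : Finset (Fin 3), (Finset.univ.filter fun m => c m ∉ S).card =
      (if 0 ∈ S then 0 else i) + (if 1 ∈ S then 0 else j) + (if 2 ∈ S then 0 else k) := by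
    intro S
    have h : (Finset.univ.filter fun m => c m ∉ S).card = ∑ a, (Finset.univ.filter fun m => c m ∉ S ∧ c m = a).card := by
      rw [Finset.card_eq_sum_card_fiberwise (f := c) (t := Finset.univ) (by simp)]
      simp only [Finset.filter_filter]
    rw [h, Fin.sum_univ_three]
    have h2 : ∀ a, (Finset.univ.filter fun m => c m ∉ S ∧ c m = a).card =
        if a ∈ S then 0 else (Finset.univ.filter fun m => c m = a).card := by
      intro a
      split_ifs with ha
      · rw [Finset.card_eq_zero, Finset.filter_eq_empty_iff]
        rintro m _ ⟨h3, rfl⟩; exact h3 ha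
      · congr 1; ext m; simp only [Finset.mem_filter, Finset.mem_univ, true_and]
        constructor
        · exact fun h => h.2
        · rintro rfl; exact ⟨ha, rfl⟩
    rw [h2, h2, h2, k0, k1, k2]
  let s : Fin 8 → Finset (Fin 3) := ![∅, {0}, {1}, {2}, {0, 1}, {0, 2}, {1, 2}, {0, 1, 2}]
  have hs : ∀ y, finrank F ((s y).sup (fun a => Rs ((![L, M, N] : Fin 3 → _) a)) : Submodule F (Fin n → F)) +
      (Finset.univ.filter fun m => c m ∉ s y).card = g y := by
    intro y
    have e1 : ((s y).sup (fun a => Rs ((![L, M, N] : Fin 3 → _) a)) : Submodule F (Fin n → F)) =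
        (![⊥, Rs L, Rs M, Rs N, Rs L ⊔ Rs M, Rs L ⊔ Rs N, Rs M ⊔ Rs N,
      Rs L ⊔ Rs M ⊔ Rs N] : Fin 8 → Submodule F (Fin n → F)) y := by
      fin_cases y <;> simp [s, sup_assoc]
    rw [cnt, hg, e1]
    congr 1
    fin_cases y <;> simp [s] <;> omega
  have hsurj : Function.Surjective s := by
    show Function.Surjective (![∅, {0}, {1}, {2}, {0, 1}, {0, 2}, {1, 2}, {0, 1, 2}] : Fin 8 → Finset (Fin 3))
    decide
  rw [e]
  refine greatest_col c _ ?_ ?_ (g x) ?_ (s x) (hs x)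
  · intro a; fin_cases a <;> assumption
  · intro a; fin_cases a <;> assumption
  · intro S
    obtain ⟨y, rfl⟩ := hsurj S
    rw [hs y]; exact hx y

theorem greatest_t {F : Type*} [Field F] {n : ℕ}
    (L : Submodule (PowerSeries F) (Fin n → LaurentSeries F))
    (hL' : L ≤ tInvStdLattice F n) (i : ℕ) (hi : i ≤ n)
    (h1 : i ≤ finrank F (Rs L)) :
    IsGreatest (detValSet (cols2 L (tStdLattice F n) i)) (2 * i - n : ℤ) := by
  let d : Fin n → ℤ := fun m => if (m : ℕ) < i then -1 else 1
  have hd : ∑ m, d m = n - 2 * i := by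
    have c1 := card_lt hi
    have c2 := Finset.card_filter_add_card_filter_not (s := Finset.univ) (fun m : Fin n => (m : ℕ) < i)
    rw [c1, Finset.card_univ, Fintype.card_fin] at c2
    simp only [d]
    rw [Finset.sum_ite, Finset.sum_const, Finset.sum_const, c1]
    simp only [nsmul_eq_mul]
    omega
  constructor
  · obtain ⟨u, hu, hr⟩ := rado_aux (F := F) (E := Fin n → F) (ι := Fin n) n _
      (fun m => if (m : ℕ) < i then Rs L else ⊤) rfl (by
        intro T
        rw [Fintype.card_fin]
        by_cases hT : ∀ m ∈ T, (m : ℕ) < i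
        · have hc : T.card ≤ i := by
            rw [← card_lt hi]
            exact Finset.card_le_card fun m hm => by simpa using hT m hm
          rcases T.eq_empty_or_nonempty with rfl | ⟨m, hm⟩
          · rw [Finset.card_empty]; omega
          · have := Submodule.finrank_mono (Finset.le_sup (f := fun m : Fin n => if (m : ℕ) < i then Rs L else ⊤) hm)
            rw [if_pos (hT m hm)] at this
            omega
        · push Not at hT
          obtain ⟨x, hx, hxI⟩ := hT
          have e : T.sup (fun m : Fin n => if (m : ℕ) < i then Rs L else ⊤) = ⊤ := by
            rw [eq_top_iff]
            have := Finset.le_sup (f := fun m : Fin n => if (m : ℕ) < i then Rs L else ⊤) hx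
            simpa [not_lt.2 hxI] using this
          rw [e, finrank_top, finrank_fin_fun]
          have := Finset.card_le_univ T
          simp at this
          omega)
    have hli : LinearIndependent F u := by
      rw [linearIndependent_iff_card_le_finrank_span]
      simpa [Set.finrank] using hr
    obtain ⟨h2, h3⟩ := order_exact u hli d
    refine ⟨fun m p => single (d m) (u m p), ?_, h2, ?_⟩
    · intro m
      have := hu m
      unfold cols2
      by_cases hm : (m : ℕ) < i
      · simp only [hm, if_true, d, mem_Rs] at this ⊢
        exact this
      · simp only [hm, if_false, d]
        rw [mem_tStd]
        refine ⟨fun p => PowerSeries.C (u m p), fun p => ?_⟩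
        simp [C_apply]
    · rw [h3, hd]; ring
  · rintro z ⟨v, hv, h0, rfl⟩
    have : ∀ m, ∃ y : Fin n → PowerSeries F, ∀ p, v m p = single (d m) 1 * (y p : LaurentSeries F) := by
      intro m
      have := hv m
      unfold cols2 at this
      by_cases hm : (m : ℕ) < i
      · simp only [hm, if_true, d] at this ⊢
        exact (mem_tInv _).1 (hL' this)
      · simp only [hm, if_false, d] at this ⊢
        exact (mem_tStd _).1 this
    choose y hy using this
    have h2 := order_lb v (Matrix.of fun p m => y m p) d (fun m p => hy m p) 0 (by simp) h0
    omega

/-- Contribution of one lattice `X` against `P`. -/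
theorem net_P {F : Type*} [Field F] {n : ℕ} (i j k : ℕ)
    (hijk : i + j + k = n)
    (L M N P : Submodule (PowerSeries F) (Fin n → LaurentSeries F))
    (hEL : stdLattice F n ≤ L) (hEM : stdLattice F n ≤ M) (hEN : stdLattice F n ≤ N)
    (hEP : stdLattice F n ≤ P)
    (hLt : L ≤ tInvStdLattice F n) (hMt : M ≤ tInvStdLattice F n)
    (hNt : N ≤ tInvStdLattice F n) (hPt : P ≤ tInvStdLattice F n)
    (f a b c d al be ga : ℕ)
    (hf : IsGreatest (detValSet (cols3 L M N i j)) (f : ℤ))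
    (hd : finrank F (Rs P) = d)
    (ha : finrank F (Rs L ⊔ Rs P : Submodule F (Fin n → F)) = a)
    (hb : finrank F (Rs M ⊔ Rs P : Submodule F (Fin n → F)) = b)
    (hc : finrank F (Rs N ⊔ Rs P : Submodule F (Fin n → F)) = c)
    (hal : (al = 0 ∧ a = d) ∨ (al = i ∧ d + i ≤ a))
    (hbe : (be = 0 ∧ b = d) ∨ (be = j ∧ d + j ≤ b))
    (hga : (ga = 0 ∧ c = d) ∨ (ga = k ∧ d + k ≤ c))
    (h1 : f = d + al + be + ga)
    (h2 : f ≤ finrank F (Rs L) + j + k)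
    (h3 : f ≤ finrank F (Rs M) + i + k)
    (h4 : f ≤ finrank F (Rs N) + i + j) :
    ∃ fLMN fLP fMP fNP fP : ℤ,
        IsGreatest (detValSet (cols3 L M N i j)) fLMN ∧
        IsGreatest (detValSet (cols2 L P i)) fLP ∧
        IsGreatest (detValSet (cols2 M P j)) fMP ∧
        IsGreatest (detValSet (cols2 N P k)) fNP ∧
        IsGreatest (detValSet (fun _ => P)) fP ∧
        fLMN = fLP + fMP + fNP - 2 * fP := by
  refine ⟨f, (d + al : ℕ), (d + be : ℕ), (d + ga : ℕ), (d : ℕ), hf, ?_, ?_, ?_, ?_, ?_⟩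
  · apply greatest_two L P hEL hEP hLt hPt i <;> omega
  · apply greatest_two M P hEM hEP hMt hPt j <;> omega
  · apply greatest_two N P hEN hEP hNt hPt k <;> omega
  · rw [← hd]; exact greatest_const P hEP hPt
  · push_cast; omega


end Helpers

/-- The main theorem for three "close" lattices `E ⊆ L, M, N ⊆ t⁻¹E`: the
conjectural network formula holds, with the optimal lattice `P` one of
`tE, L, M, N, L+M, L+N, M+N, L+M+N`:
`fᵗ_{ijk}(L,M,N) = fᵗ_{i,j+k}(L,P) + fᵗ_{j,i+k}(M,P) + fᵗ_{k,i+j}(N,P) - 2 fᵗₙ(P)`. -/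
theorem close_lattices_network_formula {F : Type*} [Field F] {n : ℕ} (i j k : ℕ)
    (hijk : i + j + k = n)
    (L M N : Submodule (PowerSeries F) (Fin n → LaurentSeries F))
    (hEL : stdLattice F n ≤ L) (hEM : stdLattice F n ≤ M) (hEN : stdLattice F n ≤ N)
    (hLt : L ≤ tInvStdLattice F n) (hMt : M ≤ tInvStdLattice F n)
    (hNt : N ≤ tInvStdLattice F n) :
    ∃ P ∈ ({tStdLattice F n, L, M, N, L ⊔ M, L ⊔ N, M ⊔ N, L ⊔ M ⊔ N} :
        Set (Submodule (PowerSeries F) (Fin n → LaurentSeries F))),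
      ∃ fLMN fLP fMP fNP fP : ℤ,
        IsGreatest (detValSet (cols3 L M N i j)) fLMN ∧
        IsGreatest (detValSet (cols2 L P i)) fLP ∧
        IsGreatest (detValSet (cols2 M P j)) fMP ∧
        IsGreatest (detValSet (cols2 N P k)) fNP ∧
        IsGreatest (detValSet (fun _ => P)) fP ∧
        fLMN = fLP + fMP + fNP - 2 * fP := by
  obtain ⟨g, hg⟩ : ∃ g : Fin 8 → ℕ, g = fun y => Module.finrank F ((![⊥, Rs L, Rs M, Rs N, Rs L ⊔ Rs M, Rs L ⊔ Rs N, Rs M ⊔ Rs N,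
      Rs L ⊔ Rs M ⊔ Rs N] : Fin 8 → Submodule F (Fin n → F)) y) +
      (![n, j + k, i + k, i + j, k, j, i, 0] : Fin 8 → ℕ) y := ⟨_, rfl⟩
  obtain ⟨x, hx⟩ := Finite.exists_min g
  have h3 := greatest_three i j k hijk L M N hEL hEM hEN hLt hMt hNt g hg x hx
  have y0 := hx 0
  have y1 := hx 1
  have y2 := hx 2
  have y3 := hx 3
  have y4 := hx 4
  have y5 := hx 5
  have y6 := hx 6
  have y7 := hx 7
  have e0 : g 0 = n := by
    rw [hg]; show Module.finrank F (⊥ : Submodule F (Fin n → F)) + n = n; rw [finrank_bot, zero_add]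
  have e1 : g 1 = Module.finrank F (Rs L) + (j + k) := by rw [hg]; rfl
  have e2 : g 2 = Module.finrank F (Rs M) + (i + k) := by rw [hg]; rfl
  have e3 : g 3 = Module.finrank F (Rs N) + (i + j) := by rw [hg]; rfl
  have e4 : g 4 = Module.finrank F (Rs L ⊔ Rs M : Submodule F (Fin n → F)) + k := by rw [hg]; rfl
  have e5 : g 5 = Module.finrank F (Rs L ⊔ Rs N : Submodule F (Fin n → F)) + j := by rw [hg]; rfl
  have e6 : g 6 = Module.finrank F (Rs M ⊔ Rs N : Submodule F (Fin n → F)) + i := by rw [hg]; rfl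
  have e7 : g 7 = Module.finrank F (Rs L ⊔ Rs M ⊔ Rs N : Submodule F (Fin n → F)) := by rw [hg]; rfl
  clear hg hx
  have sLM := Rs_sup hEL hEM hLt hMt
  have sLN := Rs_sup hEL hEN hLt hNt
  have sMN := Rs_sup hEM hEN hMt hNt
  have sLMN := Rs_sup (le_sup_of_le_left (b := M) hEL) hEN (sup_le hLt hMt) hNt
  rw [sLM] at sLMN
  have cML : Rs M ⊔ Rs L = Rs L ⊔ Rs M := sup_comm _ _
  have cNL : Rs N ⊔ Rs L = Rs L ⊔ Rs N := sup_comm _ _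
  have cNM : Rs N ⊔ Rs M = Rs M ⊔ Rs N := sup_comm _ _
  have tL : Rs L ⊔ (Rs M ⊔ Rs N) = Rs L ⊔ Rs M ⊔ Rs N := (sup_assoc _ _ _).symm
  have tM : Rs M ⊔ (Rs L ⊔ Rs N) = Rs L ⊔ Rs M ⊔ Rs N := by ac_rfl
  have tN : Rs N ⊔ (Rs L ⊔ Rs M) = Rs L ⊔ Rs M ⊔ Rs N := by ac_rfl
  have absorb : ∀ A B : Submodule F (Fin n → F), A ≤ B → A ⊔ B = B := fun A B h => sup_eq_right.2 h
  have a1 := absorb (Rs L) (Rs L ⊔ Rs M) le_sup_left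
  have a2 := absorb (Rs M) (Rs L ⊔ Rs M) le_sup_right
  have a3 := absorb (Rs L) (Rs L ⊔ Rs N) le_sup_left
  have a4 := absorb (Rs N) (Rs L ⊔ Rs N) le_sup_right
  have a5 := absorb (Rs M) (Rs M ⊔ Rs N) le_sup_left
  have a6 := absorb (Rs N) (Rs M ⊔ Rs N) le_sup_right
  have a7 := absorb (Rs L) (Rs L ⊔ Rs M ⊔ Rs N) (le_sup_of_le_left le_sup_left)
  have a8 := absorb (Rs M) (Rs L ⊔ Rs M ⊔ Rs N) (le_sup_of_le_left le_sup_right)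
  have a9 := absorb (Rs N) (Rs L ⊔ Rs M ⊔ Rs N) le_sup_right
  have main := fun P hEP hPt f a b c d al be ga => net_P i j k hijk L M N P hEL hEM hEN hEP hLt hMt hNt hPt
    f a b c d al be ga
  have hx8 : x = 0 ∨ x = 1 ∨ x = 2 ∨ x = 3 ∨ x = 4 ∨ x = 5 ∨ x = 6 ∨ x = 7 := by
    clear * -; revert x; decide
  rcases hx8 with rfl | rfl | rfl | rfl | rfl | rfl | rfl | rfl
  · refine ⟨tStdLattice F n, by simp, (g 0 : ℕ), 2 * i - n, 2 * j - n, 2 * k - n, -n, h3,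
      greatest_t L hLt i (by omega) (by omega), greatest_t M hMt j (by omega) (by omega),
      greatest_t N hNt k (by omega) (by omega), ?_, by omega⟩
    have := greatest_t L hLt 0 (by omega) (by omega)
    have e : cols2 L (tStdLattice F n) 0 = fun _ : Fin n => tStdLattice F n := by ext1 m; simp [cols2]
    rw [e] at this
    simpa using this
  · refine ⟨L, by simp, main L hEL hLt (g 1) 
      (Module.finrank F (Rs L : Submodule F (Fin n → F))) (Module.finrank F (Rs L ⊔ Rs M : Submodule F (Fin n → F))) (Module.finrank F (Rs L ⊔ Rs N : Submodule F (Fin n → F))) (Module.finrank F (Rs L : Submodule F (Fin n → F)))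
      0 j k h3 (rfl) (by rw [sup_idem]) (by rw [cML]) (by rw [cNL]) ?_ ?_ ?_ ?_ ?_ ?_ ?_⟩ <;> omega
  · refine ⟨M, by simp, main M hEM hMt (g 2) 
      (Module.finrank F (Rs L ⊔ Rs M : Submodule F (Fin n → F))) (Module.finrank F (Rs M : Submodule F (Fin n → F))) (Module.finrank F (Rs M ⊔ Rs N : Submodule F (Fin n → F))) (Module.finrank F (Rs M : Submodule F (Fin n → F)))
      i 0 k h3 (rfl) (rfl) (by rw [sup_idem]) (by rw [cNM]) ?_ ?_ ?_ ?_ ?_ ?_ ?_⟩ <;> omega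
  · refine ⟨N, by simp, main N hEN hNt (g 3) 
      (Module.finrank F (Rs L ⊔ Rs N : Submodule F (Fin n → F))) (Module.finrank F (Rs M ⊔ Rs N : Submodule F (Fin n → F))) (Module.finrank F (Rs N : Submodule F (Fin n → F))) (Module.finrank F (Rs N : Submodule F (Fin n → F)))
      i j 0 h3 (rfl) (rfl) (rfl) (by rw [sup_idem]) ?_ ?_ ?_ ?_ ?_ ?_ ?_⟩ <;> omega
  · refine ⟨L ⊔ M, by simp, main (L ⊔ M) (le_sup_of_le_left hEL) (sup_le hLt hMt) (g 4) 
      (Module.finrank F (Rs L ⊔ Rs M : Submodule F (Fin n → F))) (Module.finrank F (Rs L ⊔ Rs M : Submodule F (Fin n → F))) (Module.finrank F (Rs L ⊔ Rs M ⊔ Rs N : Submodule F (Fin n → F))) (Module.finrank F (Rs L ⊔ Rs M : Submodule F (Fin n → F)))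
      0 0 k h3 (by rw [sLM]) (by rw [sLM, a1]) (by rw [sLM, a2]) (by rw [sLM, tN]) ?_ ?_ ?_ ?_ ?_ ?_ ?_⟩ <;> omega
  · refine ⟨L ⊔ N, by simp, main (L ⊔ N) (le_sup_of_le_left hEL) (sup_le hLt hNt) (g 5) 
      (Module.finrank F (Rs L ⊔ Rs N : Submodule F (Fin n → F))) (Module.finrank F (Rs L ⊔ Rs M ⊔ Rs N : Submodule F (Fin n → F))) (Module.finrank F (Rs L ⊔ Rs N : Submodule F (Fin n → F))) (Module.finrank F (Rs L ⊔ Rs N : Submodule F (Fin n → F)))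
      0 j 0 h3 (by rw [sLN]) (by rw [sLN, a3]) (by rw [sLN, tM]) (by rw [sLN, a4]) ?_ ?_ ?_ ?_ ?_ ?_ ?_⟩ <;> omega
  · refine ⟨M ⊔ N, by simp, main (M ⊔ N) (le_sup_of_le_left hEM) (sup_le hMt hNt) (g 6) 
      (Module.finrank F (Rs L ⊔ Rs M ⊔ Rs N : Submodule F (Fin n → F))) (Module.finrank F (Rs M ⊔ Rs N : Submodule F (Fin n → F))) (Module.finrank F (Rs M ⊔ Rs N : Submodule F (Fin n → F))) (Module.finrank F (Rs M ⊔ Rs N : Submodule F (Fin n → F)))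
      i 0 0 h3 (by rw [sMN]) (by rw [sMN, tL]) (by rw [sMN, a5]) (by rw [sMN, a6]) ?_ ?_ ?_ ?_ ?_ ?_ ?_⟩ <;> omega
  · refine ⟨L ⊔ M ⊔ N, by simp, main (L ⊔ M ⊔ N) (le_sup_of_le_right hEN) (sup_le (sup_le hLt hMt) hNt)
      (g 7) 
      (Module.finrank F (Rs L ⊔ Rs M ⊔ Rs N : Submodule F (Fin n → F))) (Module.finrank F (Rs L ⊔ Rs M ⊔ Rs N : Submodule F (Fin n → F))) (Module.finrank F (Rs L ⊔ Rs M ⊔ Rs N : Submodule F (Fin n → F))) (Module.finrank F (Rs L ⊔ Rs M ⊔ Rs N : Submodule F (Fin n → F)))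
      0 0 0 h3 (by rw [sLMN]) (by rw [sLMN, a7]) (by rw [sLMN, a8]) (by rw [sLMN, a9]) ?_ ?_ ?_ ?_ ?_ ?_ ?_⟩ <;> omega

end
end
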